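/- Let G be a polycyclic group. Then G is conjugacy separable. -/

import Mathlib

/-- A group is polycyclic if it has a subnormal series with cyclic factors. -/
def IsPolycyclic (G : Type*) [Group G] : Prop :=
  ∃ (n : ℕ) (s : Fin (n + 1) → Subgroup G),
    s 0 = ⊥ ∧ s (Fin.last n) = ⊤ ∧
    ∀ i : Fin n, s i.castSucc ≤ s i.succ ∧
      ((s i.castSucc).subgroupOf (s i.succ)).Normal ∧
      -- the quotient `s i.succ / s i.castSucc` is cyclic
      ∃ x : s i.succ, (s i.castSucc).subgroupOf (s i.succ) ⊔ Subgroup.zpowers x = ⊤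

/-- A group is conjugacy separable if any two non-conjugate elements remain
non-conjugate in some finite quotient. -/
def ConjugacySeparable (G : Type u) [Group G] : Prop :=
  ∀ a b : G, ¬ IsConj a b →
    ∃ (Q : Type u) (_ : Group Q) (_ : Finite Q) (f : G →* Q),
      Function.Surjective f ∧ ¬ IsConj (f a) (f b)

/-!
Polycyclic groups satisfy the maximal condition on normal subgroups, so we may assume that all
proper quotients of `G` are conjugacy separable. An infinite such `G` contains a nontrivial
torsion-free abelian normal subgroup `A`, which can be chosen so that `ℚ ⊗ A` is an irreducible
representation. If `x` and `y` are conjugate in every finite quotient, then they are conjugate in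
every `G ⧸ Aᵐ`, and replacing `x` by a conjugate we get `y = a * x` with `a` in `A`. It remains
to see that the set `{⁅g, x⁆ | ⁅g, x⁆ ∈ A}` is closed in the profinite topology of `A`. This set
is the image of a crossed homomorphism into `A`.

By the Lie–Kolchin–Malcev theorem and irreducibility, a subgroup of finite index acts on `A`
through a commutative reduced ring `R`, finite over `ℤ`. For a crossed homomorphism into an
`R`-module, profinite closedness of the image reduces to that of orbits of finitely generated
groups of units of `R`. That is a theorem of Chevalley: a unit of a number field that is
congruent to `1` modulo a suitable integer is an `m`-th power. By Kummer theory, Chevalley's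
theorem follows from the fact that a nontrivial extension of number fields cannot have primes
that all split completely, which is read off from the simple pole of the Dedekind zeta function
at `1`.
-/

/-! ### Finitely generated abelian groups -/

section FinitelyGeneratedAbelian

lemma exists_pos_forall_of_dvd_closed {ι : Type*} [Finite ι] {p : ι → ℕ → Prop}
    (hp : ∀ i m n, m ∣ n → p i m → p i n) (h : ∀ i, ∃ n, 0 < n ∧ p i n) :
    ∃ n, 0 < n ∧ ∀ i, p i n := by
  have := Fintype.ofFinite ι
  choose n hn_pos hn using h
  exact ⟨∏ i, n i, Finset.prod_pos fun i _ ↦ hn_pos i,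
    fun i ↦ hp i _ _ (Finset.dvd_prod_of_mem n (Finset.mem_univ i)) (hn i)⟩

lemma exists_pos_nsmul_eq_zero_of_isOfFinAddOrder (A : Type*) [AddCommGroup A] [AddGroup.FG A] :
    ∃ n : ℕ, 0 < n ∧ ∀ a : A, IsOfFinAddOrder a → n • a = 0 := by
  have : Module.Finite ℤ A := Module.Finite.iff_addGroup_fg.2 inferInstance
  have : Finite (Submodule.torsion ℤ A) :=
    Module.finite_of_fg_torsion _ Submodule.torsion_isTorsion
  refine ⟨Nat.card (Submodule.torsion ℤ A), Nat.card_pos, fun a ha ↦ ?_⟩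
  have ha_mem : a ∈ Submodule.torsion ℤ A := by
    obtain ⟨n, hn, h⟩ := isOfFinAddOrder_iff_nsmul_eq_zero.1 ha
    exact ⟨⟨n, by simpa using hn.ne'⟩, by simpa [Submonoid.smul_def] using h⟩
  exact congrArg Subtype.val (card_nsmul_eq_zero' (x := (⟨a, ha_mem⟩ : Submodule.torsion ℤ A)))

lemma exists_pos_nsmul_mem_of_nsmul_mem {A : Type*} [AddCommGroup A] [AddGroup.FG A]
    (H : AddSubgroup A) :
    ∃ k : ℕ, 0 < k ∧ ∀ (n : ℕ) (a : A), 0 < n → n • a ∈ H → k • a ∈ H := by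
  obtain ⟨k, hk, h⟩ := exists_pos_nsmul_eq_zero_of_isOfFinAddOrder (A ⧸ H)
  refine ⟨k, hk, fun n a hn ha ↦ (QuotientAddGroup.eq_zero_iff _).1 ?_⟩
  rw [QuotientAddGroup.mk_nsmul]
  refine h _ (isOfFinAddOrder_iff_nsmul_eq_zero.2 ⟨n, hn, ?_⟩)
  rwa [← QuotientAddGroup.mk_nsmul, QuotientAddGroup.eq_zero_iff]

lemma eq_zero_of_forall_exists_nsmul_eq {A : Type*} [AddCommGroup A] [AddGroup.FG A] {a : A}
    (h : ∀ m : ℕ, 0 < m → ∃ b, m • b = a) : a = 0 := by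
  have : Module.Finite ℤ A := Module.Finite.iff_addGroup_fg.2 inferInstance
  have ha : a ∈ (⨅ i : ℕ, (Ideal.span {(2 : ℤ)} ^ i • ⊤ : Submodule ℤ A)) := by
    refine (Submodule.mem_iInf _).2 fun i ↦ ?_
    obtain ⟨b, rfl⟩ := h (2 ^ i) (by positivity)
    rw [Ideal.span_singleton_pow, ← Nat.cast_smul_eq_nsmul ℤ]
    push_cast
    exact Submodule.smul_mem_smul (Ideal.mem_span_singleton_self _) trivial
  -- By Krull's intersection theorem an even integer fixes `a`, so `a` is torsion.
  obtain ⟨⟨r, hr⟩, hra⟩ := (Ideal.mem_iInf_smul_pow_eq_bot_iff _ _).1 ha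
  have hr_ne : r - 1 ≠ 0 := by
    obtain ⟨c, rfl⟩ := Ideal.mem_span_singleton.1 hr
    omega
  have ha_tors : (r - 1) • a = 0 := by rw [sub_smul, one_smul, sub_eq_zero]; exact hra
  obtain ⟨n, hn, hn_tors⟩ := exists_pos_nsmul_eq_zero_of_isOfFinAddOrder A
  obtain ⟨b, rfl⟩ := h n hn
  refine hn_tors b (isOfFinAddOrder_iff_zsmul_eq_zero.2
    ⟨(r - 1) * n, mul_ne_zero hr_ne (by exact_mod_cast hn.ne'), ?_⟩)
  rw [mul_smul, natCast_zsmul, ha_tors]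

/-- A subset of an abelian group that contains every element it approximates modulo each positive
integer. In a finitely generated group these are the closed sets of the profinite topology. -/
def IsProfinitelyClosed {A : Type*} [AddCommGroup A] (S : Set A) : Prop :=
  ∀ a, (∀ m : ℕ, 0 < m → ∃ s ∈ S, ∃ z, a = s + m • z) → a ∈ S

lemma isProfinitelyClosed_addSubgroup {A : Type*} [AddCommGroup A] [AddGroup.FG A]
    (H : AddSubgroup A) : IsProfinitelyClosed (H : Set A) := by
  intro a ha
  refine (QuotientAddGroup.eq_zero_iff a).1 (eq_zero_of_forall_exists_nsmul_eq fun m hm ↦ ?_)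
  obtain ⟨s, hs, z, rfl⟩ := ha m hm
  refine ⟨z, ?_⟩
  rw [QuotientAddGroup.mk_add, (QuotientAddGroup.eq_zero_iff s).2 hs, zero_add]
  rfl

namespace IsProfinitelyClosed

variable {A B : Type*} [AddCommGroup A] [AddCommGroup B]

lemma preimage_affine {S : Set B} (hS : IsProfinitelyClosed S) (f : A →+ B) (b : B) :
    IsProfinitelyClosed {a | f a + b ∈ S} := by
  intro a ha
  refine hS _ fun m hm ↦ ?_
  obtain ⟨s, hs, z, rfl⟩ := ha m hm
  exact ⟨f s + b, hs, f z, by rw [map_add, map_nsmul, add_right_comm]⟩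

lemma iUnion {ι : Type*} [Finite ι] {S : ι → Set A} (hS : ∀ i, IsProfinitelyClosed (S i)) :
    IsProfinitelyClosed (⋃ i, S i) := by
  intro a ha
  by_contra hcon
  rw [Set.mem_iUnion, not_exists] at hcon
  obtain ⟨n, hn, hfar⟩ := exists_pos_forall_of_dvd_closed
    (p := fun i m ↦ ∀ s ∈ S i, ∀ z, a ≠ s + m • z)
    (by
      rintro i m _ ⟨k, rfl⟩ hm s hs z
      rw [mul_smul]
      exact hm s hs _)
    (fun i ↦ by simpa using mt (hS i a) (hcon i))
  obtain ⟨s, hs, z, h⟩ := ha n hn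
  obtain ⟨i, hi⟩ := Set.mem_iUnion.1 hs
  exact hfar i s hi z h

lemma image [AddGroup.FG B] {S : Set A} (hS : IsProfinitelyClosed S) {f : A →+ B}
    (hf : Function.Injective f) : IsProfinitelyClosed (f '' S) := by
  intro b hb
  obtain ⟨k, hk, hk_mem⟩ := exists_pos_nsmul_mem_of_nsmul_mem f.range
  obtain ⟨a, rfl⟩ : b ∈ f.range := isProfinitelyClosed_addSubgroup f.range b fun m hm ↦ by
    obtain ⟨_, ⟨s, -, rfl⟩, z, h⟩ := hb m hm
    exact ⟨f s, ⟨s, rfl⟩, z, h⟩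
  refine ⟨a, hS a fun m hm ↦ ?_, rfl⟩
  obtain ⟨_, ⟨s, hs, rfl⟩, z, h⟩ := hb (m * k) (by positivity)
  obtain ⟨z', hz'⟩ := hk_mem (m * k) z (by positivity)
    ⟨a - s, by rw [map_sub, h, add_sub_cancel_left]⟩
  exact ⟨s, hs, z', hf (by rw [h, map_add, map_nsmul, hz', mul_smul])⟩

end IsProfinitelyClosed

end FinitelyGeneratedAbelian

/-! ### Primes of equal norm and the Dedekind zeta function -/

section DedekindZeta

open Filter Ideal Topology NumberField ENNReal UniqueFactorizationMonoid

noncomputable section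

/-- The summand `N(I)⁻ˢ` of the Dedekind zeta function. For `s > 0` it is `0` at the zero ideal. -/
def idealWeight (K : Type*) [Field K] [NumberField K] (s : ℝ) : Ideal (𝓞 K) →* ℝ≥0∞ where
  toFun I := ENNReal.ofReal ((absNorm I : ℝ) ^ (-s))
  map_one' := by simp
  map_mul' I J := by
    rw [← ENNReal.ofReal_mul (by positivity), map_mul, Nat.cast_mul,
      Real.mul_rpow (by positivity) (by positivity)]

/-- The part of the Dedekind zeta function at a real `s` that is contributed by a set of ideals. -/
def partialZeta {K : Type*} [Field K] [NumberField K] (E : Set (Ideal (𝓞 K))) (s : ℝ) : ℝ≥0∞ :=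
  ∑' I : E, idealWeight K s I

/-- The nonzero ideals that are divisible by no member of `S`. -/
def idealsAvoiding {K : Type*} [Field K] [NumberField K] (S : Set (Ideal (𝓞 K))) :
    Set (Ideal (𝓞 K)) :=
  {I | I ≠ ⊥ ∧ ∀ P ∈ S, ¬ P ∣ I}

section

variable {K : Type*} [Field K] [NumberField K] {s : ℝ}

lemma idealWeight_apply (I : Ideal (𝓞 K)) :
    idealWeight K s I = ENNReal.ofReal ((absNorm I : ℝ) ^ (-s)) := rfl

lemma idealWeight_eq_of_absNorm_eq {L : Type*} [Field L] [NumberField L] {I : Ideal (𝓞 K)}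
    {J : Ideal (𝓞 L)} (h : absNorm I = absNorm J) : idealWeight K s I = idealWeight L s J := by
  rw [idealWeight_apply, idealWeight_apply, h]

lemma idealWeight_le_half (hs : 1 < s) {P : Ideal (𝓞 K)} (hP : Prime P) :
    idealWeight K s P ≤ 2⁻¹ := by
  have htwo : (2 : ℝ) ≤ absNorm P := by
    have h0 : absNorm P ≠ 0 := absNorm_eq_zero_iff.not.2 hP.ne_zero
    have h1 : absNorm P ≠ 1 := absNorm_eq_one_iff.not.2 (isPrime_of_prime hP).ne_top
    exact_mod_cast (by omega : 2 ≤ absNorm P)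
  calc idealWeight K s P ≤ ENNReal.ofReal ((2 : ℝ)⁻¹) := by
        refine ENNReal.ofReal_le_ofReal ?_
        rw [Real.rpow_neg (by positivity)]
        gcongr
        exact htwo.trans (Real.self_le_rpow_of_one_le (by linarith) hs.le)
    _ = 2⁻¹ := by rw [ENNReal.ofReal_inv_of_pos two_pos, ENNReal.ofReal_ofNat]

lemma LSeriesSummable_card_absNorm_eq (hs : 1 < s) :
    LSeriesSummable (fun n ↦ (Nat.card {I : Ideal (𝓞 K) // absNorm I = n} : ℂ)) s := by
  -- A divergent series would be assigned the value zero, but the residue at `1` is not zero.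
  have hne : ∀ᶠ t : ℝ in 𝓝[>] 1, dedekindZeta K t ≠ 0 := by
    have hres : (dedekindZeta_residue K : ℂ) ≠ 0 := by
      exact_mod_cast dedekindZeta_residue_ne_zero K
    filter_upwards [(tendsto_sub_one_mul_dedekindZeta_nhdsGT K).eventually_ne hres] with t ht
    exact right_ne_zero_of_mul ht
  obtain ⟨t, ht, hts⟩ := (hne.and (Ioo_mem_nhdsGT hs)).exists
  refine LSeriesSummable.of_re_le_re (s := t) (by simpa using hts.2.le) ?_
  by_contra hdiv
  exact ht (tsum_eq_zero_of_not_summable hdiv)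

lemma partialZeta_univ (s : ℝ) :
    partialZeta (Set.univ : Set (Ideal (𝓞 K))) s =
      ∑' n : ℕ, ENNReal.ofReal
        (Nat.card {I : Ideal (𝓞 K) // absNorm I = n} * (n : ℝ) ^ (-s)) := by
  rw [partialZeta, tsum_univ, ← ENNReal.tsum_fiberwise _ (fun I : Ideal (𝓞 K) ↦ absNorm I)]
  refine tsum_congr fun n ↦ ?_
  have : Finite {I : Ideal (𝓞 K) // absNorm I = n} := finite_setOfPred_absNorm_eq n
  have hconst : ∀ I : {I : Ideal (𝓞 K) // absNorm I = n},
      idealWeight K s I = ENNReal.ofReal ((n : ℝ) ^ (-s)) := by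
    rintro ⟨I, rfl⟩
    rfl
  calc _ = ∑' _ : {I : Ideal (𝓞 K) // absNorm I = n}, ENNReal.ofReal ((n : ℝ) ^ (-s)) :=
        tsum_congr hconst
    _ = _ := by
      rw [ENNReal.tsum_const, ENat.card_eq_coe_natCard, ENNReal.ofReal_mul (by positivity),
        ENNReal.ofReal_natCast, ENat.toENNReal_coe]

lemma hasSum_dedekindZeta (hs : 1 < s) :
    HasSum (fun n : ℕ ↦ (Nat.card {I : Ideal (𝓞 K) // absNorm I = n} : ℝ) * (n : ℝ) ^ (-s))
      (dedekindZeta K s).re := by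
  have h := Complex.reCLM.hasSum (LSeriesSummable_card_absNorm_eq (K := K) hs).hasSum
  refine h.congr_fun fun n ↦ ?_
  rcases eq_or_ne n 0 with rfl | hn
  · simp [Real.zero_rpow (by linarith : -s ≠ 0)]
  · rw [LSeries.term_of_ne_zero hn, ← Complex.ofReal_natCast n,
      ← Complex.ofReal_cpow (by positivity), ← Complex.ofReal_natCast, ← Complex.ofReal_div,
      Complex.reCLM_apply, Complex.ofReal_re, Real.rpow_neg (by positivity), div_eq_mul_inv]

lemma partialZeta_univ_eq_ofReal (hs : 1 < s) :
    partialZeta (Set.univ : Set (Ideal (𝓞 K))) s = ENNReal.ofReal (dedekindZeta K s).re := by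
  have h := hasSum_dedekindZeta (K := K) hs
  rw [partialZeta_univ, ← h.tsum_eq,
    ENNReal.ofReal_tsum_of_nonneg (fun n ↦ by positivity) h.summable]

lemma partialZeta_ne_top (hs : 1 < s) (E : Set (Ideal (𝓞 K))) : partialZeta E s ≠ ⊤ := by
  refine ne_top_of_le_ne_top ?_ (ENNReal.tsum_mono_subtype _ (Set.subset_univ E))
  exact (partialZeta_univ_eq_ofReal (K := K) hs).trans_ne ENNReal.ofReal_ne_top

lemma tendsto_sub_one_mul_partialZeta_univ :
    Tendsto (fun s : ℝ ↦ (s - 1) * (partialZeta (Set.univ : Set (Ideal (𝓞 K))) s).toReal) (𝓝[>] 1)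
      (𝓝 (dedekindZeta_residue K)) := by
  refine ((Complex.continuous_re.tendsto _).comp
    (tendsto_sub_one_mul_dedekindZeta_nhdsGT K)).congr' ?_
  filter_upwards [self_mem_nhdsWithin] with s hs
  have hnonneg : 0 ≤ (dedekindZeta K s).re :=
    (hasSum_dedekindZeta hs).nonneg fun n ↦ by positivity
  rw [partialZeta_univ_eq_ofReal hs, ENNReal.toReal_ofReal hnonneg, Function.comp_apply,
    ← Complex.ofReal_one, ← Complex.ofReal_sub, Complex.re_ofReal_mul]

lemma idealsAvoiding_subset_insert {S : Set (Ideal (𝓞 K))} {P : Ideal (𝓞 K)} :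
    idealsAvoiding S ⊆
      idealsAvoiding (insert P S) ∪ (P * ·) '' idealsAvoiding S := by
  rintro I ⟨hI_ne, hI⟩
  by_cases hPI : P ∣ I
  · obtain ⟨J, rfl⟩ := hPI
    refine Or.inr ⟨J, ⟨fun hJ ↦ hI_ne (by rw [hJ, Ideal.mul_bot]), fun Q hQ hQJ ↦ ?_⟩, rfl⟩
    exact hI Q hQ (hQJ.mul_left P)
  · refine Or.inl ⟨hI_ne, fun Q hQ ↦ ?_⟩
    rcases Set.mem_insert_iff.1 hQ with rfl | hQ
    exacts [hPI, hI Q hQ]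

lemma partialZeta_mul_image_le (s : ℝ) (E : Set (Ideal (𝓞 K))) (P : Ideal (𝓞 K)) :
    partialZeta ((P * ·) '' E) s ≤ idealWeight K s P * partialZeta E s := by
  calc partialZeta ((P * ·) '' E) s
      ≤ ∑' I : E, idealWeight K s (P * I) :=
        ENNReal.tsum_le_tsum_comp_of_surjective
          (f := fun I : E ↦ (⟨P * I, I, I.2, rfl⟩ : (P * ·) '' E))
          (by rintro ⟨_, I, hI, rfl⟩; exact ⟨⟨I, hI⟩, rfl⟩) _
    _ = idealWeight K s P * partialZeta E s := by
      simp_rw [map_mul]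
      exact ENNReal.tsum_mul_left

lemma partialZeta_idealsAvoiding_le_two_mul (hs : 1 < s) (S : Set (Ideal (𝓞 K)))
    {P : Ideal (𝓞 K)} (hP : Prime P) :
    partialZeta (idealsAvoiding S) s ≤ 2 * partialZeta (idealsAvoiding (insert P S)) s := by
  set z := partialZeta (idealsAvoiding S) s
  set z' := partialZeta (idealsAvoiding (insert P S)) s
  have hsplit : z ≤ z' + 2⁻¹ * z :=
    calc z ≤ z' + partialZeta ((P * ·) '' idealsAvoiding S) s :=
          (ENNReal.tsum_mono_subtype _ idealsAvoiding_subset_insert).trans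
            (ENNReal.tsum_union_le _ _ _)
      _ ≤ z' + 2⁻¹ * z := by
          gcongr
          exact (partialZeta_mul_image_le _ _ _).trans
            (mul_le_mul_left (idealWeight_le_half hs hP) _)
  have hhalf : 2⁻¹ * z ≠ ⊤ := ENNReal.mul_ne_top (by simp) (partialZeta_ne_top hs _)
  have hz : 2⁻¹ * z + 2⁻¹ * z = z := by rw [← add_mul, ENNReal.inv_two_add_inv_two, one_mul]
  have hle : 2⁻¹ * z ≤ z' := by
    refine (ENNReal.add_le_add_iff_right hhalf).1 ?_
    rwa [hz]
  calc z = 2 * (2⁻¹ * z) := by rw [two_mul, hz]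
    _ ≤ 2 * z' := by gcongr

lemma partialZeta_univ_le_two_pow_mul (hs : 1 < s) (S : Finset (Ideal (𝓞 K)))
    (hS : ∀ P ∈ S, Prime P) :
    partialZeta (Set.univ : Set (Ideal (𝓞 K))) s ≤
      2 ^ S.card * partialZeta (idealsAvoiding (S : Set (Ideal (𝓞 K)))) s := by
  classical
  induction S using Finset.induction_on with
  | empty =>
    have hbot : idealWeight K s ⊥ = 0 := by
      rw [idealWeight_apply, absNorm_bot, Nat.cast_zero, Real.zero_rpow (by linarith),
        ENNReal.ofReal_zero]
    have hcover : (Set.univ : Set (Ideal (𝓞 K))) ⊆ {⊥} ∪ idealsAvoiding ∅ := fun I _ ↦ by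
      by_cases hI : I = ⊥ <;> simp [idealsAvoiding, hI]
    calc partialZeta (Set.univ : Set (Ideal (𝓞 K))) s
        ≤ partialZeta {⊥} s + partialZeta (idealsAvoiding (∅ : Set (Ideal (𝓞 K)))) s :=
          (ENNReal.tsum_mono_subtype _ hcover).trans (ENNReal.tsum_union_le _ _ _)
      _ = _ := by
        rw [Finset.coe_empty]
        simp [partialZeta, hbot]
  | insert P S hPS ih =>
    have hstep := partialZeta_idealsAvoiding_le_two_mul hs (S : Set (Ideal (𝓞 K)))
      (hS P (Finset.mem_insert_self P S))
    calc partialZeta Set.univ s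
        ≤ 2 ^ S.card * partialZeta (idealsAvoiding (S : Set (Ideal (𝓞 K)))) s :=
          ih fun Q hQ ↦ hS Q (Finset.mem_insert_of_mem hQ)
      _ ≤ 2 ^ S.card * (2 * partialZeta (idealsAvoiding (insert P S)) s) := by gcongr
      _ = _ := by rw [Finset.card_insert_of_notMem hPS, Finset.coe_insert, pow_succ, mul_assoc]

lemma exists_multiset_prod_eq_of_mem_idealsAvoiding {S : Set (Ideal (𝓞 K))} {I : Ideal (𝓞 K)}
    (hI : I ∈ idealsAvoiding S) :
    ∃ t : Multiset {P : Ideal (𝓞 K) // Prime P ∧ P ∉ S}, (t.map Subtype.val).prod = I := by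
  refine ⟨(normalizedFactors I).attach.map fun P ↦ ⟨P.1, prime_of_normalized_factor P.1 P.2,
    fun hPS ↦ hI.2 P.1 hPS (dvd_of_mem_normalizedFactors P.2)⟩, ?_⟩
  rw [Multiset.map_map]
  exact (congrArg Multiset.prod (Multiset.attach_map_val _)).trans
    (Ideal.prod_normalizedFactors_eq_self hI.1)

lemma partialZeta_idealsAvoiding_le_tsum_multiset (s : ℝ) (S : Set (Ideal (𝓞 K))) :
    partialZeta (idealsAvoiding S) s ≤
      ∑' t : Multiset {P : Ideal (𝓞 K) // Prime P ∧ P ∉ S},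
        (t.map fun P ↦ idealWeight K s P.1).prod := by
  let f := fun t : Multiset {P : Ideal (𝓞 K) // Prime P ∧ P ∉ S} ↦ (t.map Subtype.val).prod
  calc partialZeta (idealsAvoiding S) s ≤ ∑' I : Set.range f, idealWeight K s I :=
        ENNReal.tsum_mono_subtype _ fun I ↦ exists_multiset_prod_eq_of_mem_idealsAvoiding
    _ ≤ ∑' t, idealWeight K s (f t) :=
        ENNReal.tsum_le_tsum_comp_of_surjective Set.rangeFactorization_surjective
          fun I : Set.range f ↦ idealWeight K s I
    _ = _ := tsum_congr fun t ↦ by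
      simp only [f, map_multiset_prod, Multiset.map_map, Function.comp_def]

end

lemma injective_disjSum {α β : Type*} :
    Function.Injective fun p : Multiset α × Multiset β ↦ p.1.disjSum p.2 := by
  classical
  have hinl : ∀ (s : Multiset α) (t : Multiset β) (a : α),
      (s.disjSum t).count (.inl a) = s.count a := fun s t a ↦ by
    simp [Multiset.disjSum, Multiset.count_map_eq_count' _ _ Sum.inl_injective]
  have hinr : ∀ (s : Multiset α) (t : Multiset β) (b : β),
      (s.disjSum t).count (.inr b) = t.count b := fun s t b ↦ by
    simp [Multiset.disjSum, Multiset.count_map_eq_count' _ _ Sum.inr_injective]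
  rintro ⟨s, t⟩ ⟨s', t'⟩ h
  refine Prod.ext (Multiset.ext.2 fun a ↦ ?_) (Multiset.ext.2 fun b ↦ ?_)
  · rw [← hinl s t, ← hinl s' t']
    exact congrArg _ h
  · rw [← hinr s t, ← hinr s' t']
    exact congrArg _ h

lemma tsum_multiset_mul_tsum_multiset_le {α β : Type*} (w : α ⊕ β → ℝ≥0∞) :
    (∑' s : Multiset α, (s.map fun a ↦ w (.inl a)).prod) *
      ∑' t : Multiset β, (t.map fun b ↦ w (.inr b)).prod ≤
      ∑' r : Multiset (α ⊕ β), (r.map w).prod := by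
  calc _ = ∑' p : Multiset α × Multiset β, ((p.1.disjSum p.2).map w).prod := by
        rw [ENNReal.tsum_prod', ← ENNReal.tsum_mul_right]
        refine tsum_congr fun s ↦ ?_
        rw [← ENNReal.tsum_mul_left]
        refine tsum_congr fun t ↦ ?_
        rw [Multiset.map_disjSum, Multiset.prod_add]
    _ ≤ _ := ENNReal.tsum_comp_le_tsum_of_injective injective_disjSum fun r ↦ (r.map w).prod

lemma injective_prod_map_of_injective {M ι : Type*} [CommMonoidWithZero M]
    [UniqueFactorizationMonoid M] [NormalizationMonoid M] [Subsingleton Mˣ] {q : ι → M}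
    (hq : Function.Injective q) (hq_prime : ∀ i, Prime (q i)) :
    Function.Injective fun t : Multiset ι ↦ (t.map q).prod := by
  have hprime : ∀ (t : Multiset ι), ∀ p ∈ t.map q, Prime p := fun t p hp ↦ by
    obtain ⟨i, -, rfl⟩ := Multiset.mem_map.1 hp
    exact hq_prime i
  intro t t' h
  refine Multiset.map_injective hq ?_
  rw [← normalizedFactors_prod_of_prime (hprime t), ← normalizedFactors_prod_of_prime (hprime t')]
  exact congrArg normalizedFactors h

section

variable {K L : Type*} [Field K] [NumberField K] [Field L] [NumberField L]
    {S : Set (Ideal (𝓞 K))}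
    {q : {P : Ideal (𝓞 K) // Prime P ∧ P ∉ S} ⊕ {P : Ideal (𝓞 K) // Prime P ∧ P ∉ S} →
      Ideal (𝓞 L)}

lemma partialZeta_idealsAvoiding_sq_le (hq : Function.Injective q) (hq_prime : ∀ i, Prime (q i))
    (hq_norm : ∀ i, absNorm (q i) = absNorm (i.elim id id).1) (s : ℝ) :
    partialZeta (idealsAvoiding S) s ^ 2 ≤ partialZeta (Set.univ : Set (Ideal (𝓞 L))) s := by
  have hweight : ∀ i, idealWeight K s (i.elim id id).1 = idealWeight L s (q i) := fun i ↦
    idealWeight_eq_of_absNorm_eq (hq_norm i).symm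
  calc partialZeta (idealsAvoiding S) s ^ 2
      ≤ ∑' t : Multiset _, (t.map fun i ↦ idealWeight K s (i.elim id id).1).prod := by
        rw [sq]
        exact (mul_le_mul' (partialZeta_idealsAvoiding_le_tsum_multiset s S)
          (partialZeta_idealsAvoiding_le_tsum_multiset s S)).trans
          (tsum_multiset_mul_tsum_multiset_le _)
    _ = ∑' t : Multiset _, idealWeight L s (t.map q).prod := tsum_congr fun t ↦ by
        simp only [hweight, map_multiset_prod, Multiset.map_map, Function.comp_def]
    _ ≤ ∑' I : Ideal (𝓞 L), idealWeight L s I :=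
        ENNReal.tsum_comp_le_tsum_of_injective (injective_prod_map_of_injective hq hq_prime) _
    _ = _ := (tsum_univ _).symm

-- Under these hypotheses `ζ_L` would have a pole of order at least two at `1`.
theorem not_exists_two_primes_of_same_absNorm (hS : S.Finite) (hS_prime : ∀ P ∈ S, Prime P)
    (hq : Function.Injective q) (hq_prime : ∀ i, Prime (q i))
    (hq_norm : ∀ i, absNorm (q i) = absNorm (i.elim id id).1) : False := by
  lift S to Finset (Ideal (𝓞 K)) using hS
  set zK : ℝ → ℝ := fun s ↦ (partialZeta (Set.univ : Set (Ideal (𝓞 K))) s).toReal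
  set zL : ℝ → ℝ := fun s ↦ (partialZeta (Set.univ : Set (Ideal (𝓞 L))) s).toReal
  have hle : ∀ s : ℝ, 1 < s → zK s ^ 2 ≤ (2 ^ S.card) ^ 2 * zL s := fun s hs ↦ by
    have h : partialZeta (Set.univ : Set (Ideal (𝓞 K))) s ^ 2 ≤
        (2 ^ S.card) ^ 2 * partialZeta (Set.univ : Set (Ideal (𝓞 L))) s :=
      calc partialZeta (Set.univ : Set (Ideal (𝓞 K))) s ^ 2
      _ ≤ (2 ^ S.card * partialZeta (idealsAvoiding (S : Set (Ideal (𝓞 K)))) s) ^ 2 := by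
          gcongr
          exact partialZeta_univ_le_two_pow_mul hs S hS_prime
      _ ≤ (2 ^ S.card) ^ 2 * partialZeta Set.univ s := by
          rw [mul_pow]
          gcongr
          exact partialZeta_idealsAvoiding_sq_le hq hq_prime hq_norm s
    simpa [zK, zL] using ENNReal.toReal_mono
      (ENNReal.mul_ne_top (by simp) (partialZeta_ne_top hs _)) h
  have hzero : Tendsto (fun s : ℝ ↦ s - 1) (𝓝[>] 1) (𝓝 0) := by
    rw [← sub_self (1 : ℝ)]
    exact ((continuous_id.sub continuous_const).tendsto _).mono_left nhdsWithin_le_nhds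
  have hK : Tendsto (fun s ↦ ((s - 1) * zK s) ^ 2) (𝓝[>] 1) (𝓝 (dedekindZeta_residue K ^ 2)) :=
    tendsto_sub_one_mul_partialZeta_univ.pow 2
  have hL : Tendsto (fun s ↦ (2 ^ S.card) ^ 2 * ((s - 1) * ((s - 1) * zL s))) (𝓝[>] 1)
      (𝓝 ((2 ^ S.card) ^ 2 * (0 * dedekindZeta_residue L))) :=
    (hzero.mul tendsto_sub_one_mul_partialZeta_univ).const_mul _
  have hres : dedekindZeta_residue K ^ 2 ≤ (2 ^ S.card) ^ 2 * (0 * dedekindZeta_residue L) := by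
    refine le_of_tendsto_of_tendsto hK hL ?_
    filter_upwards [self_mem_nhdsWithin] with s hs
    calc ((s - 1) * zK s) ^ 2 = (s - 1) ^ 2 * zK s ^ 2 := mul_pow _ _ _
      _ ≤ (s - 1) ^ 2 * ((2 ^ S.card) ^ 2 * zL s) := by gcongr; exact hle s hs
      _ = _ := by ring
  have hpos := dedekindZeta_residue_pos K
  rw [zero_mul, mul_zero] at hres
  exact (pow_pos hpos 2).not_ge hres

end
end
end DedekindZeta

/-! ### Local powers in number fields -/

section LocalPowers

open Ideal NumberField Polynomial
open scoped Pointwise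

section Galois

variable {F L : Type*} [Field F] [NumberField F] [Field L] [NumberField L] [Algebra F L]
  [IsGalois F L]

lemma absNorm_smul_eq_of_stabilizer_eq_bot {P : Ideal (𝓞 F)} (hP : Prime P)
    (Q : Ideal (𝓞 L)) [Q.IsPrime] [Q.LiesOver P] (hQ : MulAction.stabilizer Gal(L/F) Q = ⊥)
    (σ : Gal(L/F)) : absNorm (σ • Q) = absNorm P := by
  have := Ideal.isPrime_of_prime hP
  have := IsPrime.isMaximal this hP.ne_zero
  have := finiteQuotientOfFreeOfNeBot P hP.ne_zero
  have h := card_stabilizer_eq_card_inertia_mul_finrank (G := Gal(L/F)) P Q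
  rw [hQ, Subgroup.card_bot] at h
  rw [← absNorm_pow_inertiaDeg P (σ • Q), inertiaDeg_smul, Nat.eq_one_of_mul_eq_one_left h.symm,
    pow_one]

lemma finite_setOf_prime_mem {R : Type*} [CommRing R] [IsDedekindDomain R] {n : R} (hn : n ≠ 0) :
    {P : Ideal R | Prime P ∧ n ∈ P}.Finite := by
  have hspan : span {n} ≠ ⊥ := by rwa [Ne, span_singleton_eq_bot]
  refine (UniqueFactorizationMonoid.normalizedFactors (span {n})).toFinset.finite_toSet.subset ?_
  rintro P ⟨hP, hnP⟩
  rw [Finset.mem_coe, Multiset.mem_toFinset, mem_normalizedFactors_iff hspan]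
  exact ⟨isPrime_of_prime hP, (span_singleton_le_iff_mem _).2 hnP⟩

-- A nontrivial `σ` would move every chosen `Q` to a second prime of the same norm.
theorem subsingleton_gal_of_forall_exists_stabilizer_eq_bot {n : 𝓞 F} (hn : n ≠ 0)
    (h : ∀ P : Ideal (𝓞 F), Prime P → n ∉ P → ∃ Q : Ideal (𝓞 L), Q.IsPrime ∧ Q.LiesOver P ∧
      MulAction.stabilizer Gal(L/F) Q = ⊥) :
    Subsingleton Gal(L/F) := by
  refine not_nontrivial_iff_subsingleton.1 fun _ ↦ ?_
  obtain ⟨σ, hσ⟩ := exists_ne (1 : Gal(L/F))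
  set S := {P : Ideal (𝓞 F) | Prime P ∧ n ∈ P}
  have hS : ∀ P : {P // Prime P ∧ P ∉ S}, ∃ Q : Ideal (𝓞 L), Q.IsPrime ∧ Q.LiesOver P.1 ∧
      MulAction.stabilizer Gal(L/F) Q = ⊥ := fun P ↦
    h P.1 P.2.1 fun hmem ↦ P.2.2 ⟨P.2.1, hmem⟩
  choose Q hQ_prime hQ_over hQ_stab using hS
  let g : {P // Prime P ∧ P ∉ S} ⊕ {P // Prime P ∧ P ∉ S} → Gal(L/F) :=
    Sum.elim (fun _ ↦ 1) (fun _ ↦ σ)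
  refine not_exists_two_primes_of_same_absNorm (S := S) (q := fun i ↦ g i • Q (i.elim id id))
    (finite_setOf_prime_mem hn) (fun P hP ↦ hP.1) ?_ (fun i ↦ ?_)
    fun i ↦ absNorm_smul_eq_of_stabilizer_eq_bot (i.elim id id).2.1 _ (hQ_stab _) (g i)
  · intro i j (hij : g i • Q (i.elim id id) = g j • Q (j.elim id id))
    have hunder : i.elim id id = j.elim id id := by
      have hi := over_def (g i • Q (i.elim id id)) (i.elim id id).1
      have hj := over_def (g j • Q (j.elim id id)) (j.elim id id).1
      exact Subtype.ext (hi.trans ((congrArg _ hij).trans hj.symm))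
    have hg : (g j)⁻¹ * g i ∈ MulAction.stabilizer Gal(L/F) (Q (j.elim id id)) := by
      rw [MulAction.mem_stabilizer_iff, mul_smul, inv_smul_eq_iff, ← hij, hunder]
    rw [hQ_stab, Subgroup.mem_bot, inv_mul_eq_one] at hg
    rcases i with P | P <;> rcases j with P' | P' <;> simp_all [g]
  · have : (g i • Q (i.elim id id)).IsPrime := inferInstance
    exact prime_of_isPrime (ne_bot_of_liesOver_of_ne_bot (i.elim id id).2.1.ne_zero _) this

lemma exists_sub_mem_of_pow_sub_pow_mem {R S : Type*} [CommRing R] [CommRing S] [IsDomain S]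
    [Algebra R S] [FaithfulSMul R S] {M : ℕ} (hM : 0 < M) {ζ : R} (hζ : IsPrimitiveRoot ζ M)
    {Q : Ideal S} [Q.IsPrime] {α : S} {x : R} (h : α ^ M - algebraMap R S x ^ M ∈ Q) :
    ∃ y : R, α - algebraMap R S y ∈ Q := by
  have : NeZero M := ⟨hM.ne'⟩
  have hζ' := hζ.map_of_injective (FaithfulSMul.algebraMap_injective R S)
  rw [hζ'.pow_sub_pow_eq_prod_sub_mul _ _ hM, IsPrime.prod_mem_iff] at h
  obtain ⟨η, hη, h⟩ := h
  rw [mem_nthRootsFinset hM] at hη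
  obtain ⟨i, -, rfl⟩ := hζ'.eq_pow_of_pow_eq_one hη
  exact ⟨ζ ^ i * x, by simpa using h⟩

lemma algEquiv_eq_one_of_apply_root_eq {K E : Type*} [Field K] [Field E] [Algebra K E] {M : ℕ}
    {a ζ : K} (hζ : IsPrimitiveRoot ζ M) [IsSplittingField K E (X ^ M - C a)] {α : E}
    (hα : α ^ M = algebraMap K E a) {σ : Gal(E/K)} (hσ : σ α = α) : σ = 1 := by
  classical
  refine AlgEquiv.coe_toAlgHom_injective (AlgHom.ext_of_adjoin_eq_top
    (IsSplittingField.adjoin_rootSet E (X ^ M - C a)) fun b hb ↦ ?_)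
  rw [rootSet_def, Finset.mem_coe, Multiset.mem_toFinset, aroots_def, Polynomial.map_sub,
    Polynomial.map_pow, map_X, map_C, ← nthRoots,
    (hζ.map_of_injective (algebraMap K E).injective).nthRoots_eq hα, Multiset.mem_map] at hb
  obtain ⟨i, -, rfl⟩ := hb
  simp [hσ]

-- At almost all primes `α` is congruent to an element of `F`, so stabilizers fix `α`.
lemma subsingleton_gal_of_forall_prime_exists_pow {M : ℕ} (hM : 0 < M) {ζ : 𝓞 F}
    (hζ : IsPrimitiveRoot ζ M) {u : 𝓞 F}
    (hu : ∀ P : Ideal (𝓞 F), Prime P → ∃ x, u - x ^ M ∈ P) {α : 𝓞 L}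
    (hα : α ^ M = algebraMap (𝓞 F) (𝓞 L) u) (hα_fix : ∀ σ : Gal(L/F), σ • α = α → σ = 1) :
    Subsingleton Gal(L/F) := by
  classical
  set δ : 𝓞 L := ∏ σ ∈ Finset.univ.erase (1 : Gal(L/F)), (σ • α - α)
  have hδ : δ ≠ 0 := Finset.prod_ne_zero_iff.2 fun σ hσ h ↦
    Finset.ne_of_mem_erase hσ (hα_fix σ (sub_eq_zero.1 h))
  have hn : (absNorm (span {δ}) : 𝓞 F) ≠ 0 := by simpa using hδ
  refine subsingleton_gal_of_forall_exists_stabilizer_eq_bot hn fun P hP hnP ↦ ?_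
  have := isPrime_of_prime hP
  obtain ⟨Q, -, hQ, hQP⟩ := exists_ideal_over_prime_of_isIntegral (S := 𝓞 L) P ⊥ (by simp)
  refine ⟨Q, hQ, ⟨hQP.symm⟩, (Subgroup.eq_bot_iff_forall _).2 fun σ hσ ↦ ?_⟩
  by_contra hσ1
  have hδQ : δ ∉ Q := fun h ↦ hnP (by
    rw [← hQP, mem_comap, map_natCast]
    exact (span_singleton_le_iff_mem _).2 h (absNorm_mem _))
  obtain ⟨x, hx⟩ := hu P hP
  obtain ⟨y, hy⟩ : ∃ y, α - algebraMap (𝓞 F) (𝓞 L) y ∈ Q :=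
    exists_sub_mem_of_pow_sub_pow_mem hM hζ (x := x) (by
      rw [hα, ← map_pow, ← map_sub, ← mem_comap, hQP]
      exact hx)
  have hσy : σ • α - algebraMap (𝓞 F) (𝓞 L) y ∈ Q := by
    have h := smul_mem_pointwise_smul σ _ _ hy
    rwa [MulAction.mem_stabilizer_iff.1 hσ, smul_sub, smul_algebraMap] at h
  refine hδQ (Q.mem_of_dvd (Finset.dvd_prod_of_mem _ (by simpa using hσ1)) ?_)
  simpa using Q.sub_mem hσy hy

end Galois

theorem exists_pow_eq_of_forall_prime {F : Type*} [Field F] [NumberField F] {M : ℕ} (hM : 0 < M)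
    {ζ : F} (hζ : IsPrimitiveRoot ζ M) {u : 𝓞 F} (hu0 : u ≠ 0)
    (hu : ∀ P : Ideal (𝓞 F), Prime P → ∃ x, u - x ^ M ∈ P) : ∃ w : F, w ^ M = u := by
  have : NeZero M := ⟨hM.ne'⟩
  let L := (X ^ M - C (u : F)).SplittingField
  have : NumberField L := NumberField.of_module_finite F _
  have : IsGalois F L := IsGalois.of_separable_splitting_field
    (separable_X_pow_sub_C (u : F) (by exact_mod_cast hM.ne') (by simpa using hu0))
  set a : L := rootOfSplitsXPowSubC hM (u : F) L
  have ha : a ^ M = algebraMap F L u := rootOfSplitsXPowSubC_pow (u : F) L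
  have ha_int : IsIntegral ℤ a := .of_pow hM (by
    rw [ha]
    exact (RingOfIntegers.isIntegral_coe u).map (algebraMap F L).toIntAlgHom)
  have : Subsingleton Gal(L/F) := by
    refine subsingleton_gal_of_forall_prime_exists_pow hM hζ.toInteger_isPrimitiveRoot hu
      (α := ⟨a, ha_int⟩) (RingOfIntegers.coe_injective ha) fun σ hσ ↦ ?_
    exact algEquiv_eq_one_of_apply_root_eq hζ ha (congrArg (algebraMap (𝓞 L) L) hσ)
  obtain ⟨w, hw⟩ : a ∈ (⊥ : IntermediateField F L) :=
    (IsGalois.mem_bot_iff_fixed a).2 fun σ ↦ by rw [Subsingleton.elim σ 1, AlgEquiv.one_apply]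
  exact ⟨w, (algebraMap F L).injective (by rw [map_pow, ← ha]; exact congrArg (· ^ M) hw)⟩

end LocalPowers

/-! ### Chevalley's theorem on units -/

section UnitCongruences

open NumberField

section AbelianKummer

lemma orderOf_mk_range_powMonoidHom_dvd {G : Type*} [CommGroup G] (M : ℕ) (u : G) :
    orderOf (u : G ⧸ (powMonoidHom M : G →* G).range) ∣ M :=
  orderOf_dvd_of_pow_eq_one ((QuotientGroup.eq_one_iff _).2 ⟨u, rfl⟩)

variable {K F : Type*} [Field K] [Field F] [Algebra K F] [IsAbelianGalois K F]
  [FiniteDimensional K F] {M : ℕ} {ζ y : F} {u : Kˣ}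

open scoped IsMulCommutative in
lemma modEq_one_of_apply_primitiveRoot_eq_pow (hM : 0 < M) (hζ : IsPrimitiveRoot ζ M)
    (hy : y ^ M = algebraMap K F u) {τ : Gal(F/K)} {t : ℕ} (hτ : τ ζ = ζ ^ t) :
    t ≡ 1 [MOD orderOf (u : Kˣ ⧸ (powMonoidHom M : Kˣ →* Kˣ).range)] := by
  have : NeZero M := ⟨hM.ne'⟩
  have hu : algebraMap K F u ≠ 0 := by simp
  have hy0 : y ≠ 0 := by
    rintro rfl
    exact hu (by rw [← hy, zero_pow hM.ne'])
  have hτy : τ y ≠ 0 := by simpa using hy0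
  have hζ0 : ζ ≠ 0 := hζ.ne_zero hM.ne'
  have hfix : ∀ σ : Gal(F/K), σ (y ^ t / τ y) = y ^ t / τ y := fun σ ↦ by
    obtain ⟨i, -, hi⟩ := hζ.eq_pow_of_pow_eq_one (ξ := σ y / y) (by
      rw [div_pow, ← map_pow, hy, AlgEquiv.commutes, div_self hu])
    have hσy : σ y = ζ ^ i * y := by rw [hi, div_mul_cancel₀ _ hy0]
    have hcomm : σ (τ y) = τ (σ y) := DFunLike.congr_fun (mul_comm σ τ) y
    rw [map_div₀, map_pow, hcomm, hσy, map_mul, map_pow, hτ, mul_pow, ← pow_mul, ← pow_mul,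
      mul_comm i t, mul_div_mul_left _ _ (pow_ne_zero _ hζ0)]
  obtain ⟨z, hz⟩ := IntermediateField.mem_bot.1 ((IsGalois.mem_bot_iff_fixed _).2 hfix)
  have hz0 : z ≠ 0 := by
    rintro rfl
    rw [map_zero] at hz
    exact div_ne_zero (pow_ne_zero _ hy0) hτy hz.symm
  refine (pow_eq_pow_iff_modEq (x := (u : Kˣ ⧸ (powMonoidHom M : Kˣ →* Kˣ).range))).1 ?_
  rw [pow_one, ← QuotientGroup.mk_pow, eq_comm, QuotientGroup.eq]
  refine ⟨Units.mk0 z hz0, Units.ext ((algebraMap K F).injective ?_)⟩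
  have : (y ^ t / τ y) ^ M = (algebraMap K F u)⁻¹ * algebraMap K F u ^ t := by
    rw [div_pow, ← map_pow τ, hy, AlgEquiv.commutes, ← pow_mul, mul_comm t M, pow_mul, hy,
      div_eq_inv_mul]
  simpa [hz] using this

lemma exists_isPrimitiveRoot_orderOf_mk (hM : 0 < M) (hζ : IsPrimitiveRoot ζ M)
    (hy : y ^ M = algebraMap K F u) :
    ∃ η : K, IsPrimitiveRoot η (orderOf (u : Kˣ ⧸ (powMonoidHom M : Kˣ →* Kˣ).range)) := by
  have : NeZero M := ⟨hM.ne'⟩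
  set g := orderOf (u : Kˣ ⧸ (powMonoidHom M : Kˣ →* Kˣ).range)
  have hgM : g ∣ M := orderOf_mk_range_powMonoidHom_dvd M u
  have hfix : ∀ τ : Gal(F/K), τ (ζ ^ (M / g)) = ζ ^ (M / g) := fun τ ↦ by
    obtain ⟨t, -, ht⟩ := hζ.eq_pow_of_pow_eq_one (ξ := τ ζ) (by
      rw [← map_pow, hζ.pow_eq_one, map_one])
    have ht_mod : t ≡ 1 [MOD g] := modEq_one_of_apply_primitiveRoot_eq_pow hM hζ hy ht.symm
    rw [map_pow, ← ht, ← pow_mul,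
      (isOfFinOrder_iff_pow_eq_one.2 ⟨M, hM, hζ.pow_eq_one⟩).pow_eq_pow_iff_modEq, ← hζ.eq_orderOf]
    have h := ht_mod.mul_right' (M / g)
    rwa [one_mul, Nat.mul_div_cancel' hgM] at h
  obtain ⟨η, hη⟩ := IntermediateField.mem_bot.1 ((IsGalois.mem_bot_iff_fixed _).2 hfix)
  have hprim := hζ.pow hM (Nat.div_mul_cancel hgM).symm
  rw [← hη] at hprim
  exact ⟨η, hprim.of_map_of_injective (algebraMap K F).injective⟩

end AbelianKummer

section NumberField

lemma exists_unit_pow_eq_of_pow_eq {K : Type*} [Field K] {M : ℕ} (hM : 0 < M) {x : K}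
    {v : (𝓞 K)ˣ} (hx : x ^ M = (v : 𝓞 K)) : ∃ w : (𝓞 K)ˣ, w ^ M = v := by
  have hx_int : IsIntegral ℤ x := .of_pow hM (hx ▸ RingOfIntegers.isIntegral_coe _)
  obtain ⟨X, rfl⟩ : ∃ X : 𝓞 K, (X : K) = x := ⟨⟨x, hx_int⟩, rfl⟩
  have hX : X ^ M = v := RingOfIntegers.coe_injective (by rw [map_pow, hx])
  obtain ⟨w, hw⟩ := (isUnit_pow_iff hM.ne').1 (hX ▸ v.isUnit)
  exact ⟨w, Units.ext (by rw [Units.val_pow_eq_pow_val, hw, hX])⟩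

variable {K : Type*} [Field K] [NumberField K]

lemma exists_pow_eq_pow_torsionOrder {M : ℕ} (hM : 0 < M) {u : (𝓞 K)ˣ}
    (hu : ∀ P : Ideal (𝓞 K), Prime P → ∃ x : 𝓞 K, (u : 𝓞 K) - x ^ M ∈ P) :
    ∃ x : (𝓞 K)ˣ, x ^ M = u ^ Units.torsionOrder K := by
  have : NeZero M := ⟨hM.ne'⟩
  have : NeZero (M : K) := ⟨by exact_mod_cast hM.ne'⟩
  let F := CyclotomicField M K
  have : NumberField F := IsCyclotomicExtension.numberField {M} K F
  have : FiniteDimensional K F := IsCyclotomicExtension.finiteDimensional {M} K F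
  have : IsAbelianGalois K F := IsCyclotomicExtension.isAbelianGalois {M} K F
  have hζ := IsCyclotomicExtension.zeta_spec M K F
  obtain ⟨y, hy⟩ : ∃ y : F, y ^ M = algebraMap (𝓞 K) (𝓞 F) u :=
    exists_pow_eq_of_forall_prime hM hζ (by simp) fun P hP ↦ by
      have := Ideal.isPrime_of_prime hP
      obtain ⟨x, hx⟩ := hu (P.comap (algebraMap (𝓞 K) (𝓞 F))) (Ideal.prime_of_isPrime
        (Ideal.IsIntegral.comap_ne_bot (𝓞 K) hP.ne_zero) inferInstance)
      exact ⟨algebraMap _ _ x, by simpa using hx⟩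
  set uK : Kˣ := Units.map (algebraMap (𝓞 K) K) u
  obtain ⟨η, hη⟩ := exists_isPrimitiveRoot_orderOf_mk (u := uK) hM hζ hy
  have : NeZero (orderOf (uK : Kˣ ⧸ (powMonoidHom M : Kˣ →* Kˣ).range)) :=
    ⟨(Nat.pos_of_dvd_of_pos (orderOf_mk_range_powMonoidHom_dvd M uK) hM).ne'⟩
  obtain ⟨x, hx⟩ := (QuotientGroup.eq_one_iff _).1 (orderOf_dvd_iff_pow_eq_one.1
    (Units.dvd_torsionOrder_of_isPrimitiveRoot hη))
  exact exists_unit_pow_eq_of_pow_eq hM (x := (x : K)) (by simpa [uK] using congrArg Units.val hx)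

lemma exists_pos_forall_dvd_sub_one_imp_exists_sub_pow_mem {M : ℕ} (hM : 0 < M) :
    ∃ N : ℕ, 0 < N ∧ ∀ u : (𝓞 K)ˣ, (N : 𝓞 K) ∣ u - 1 →
      ∀ P : Ideal (𝓞 K), Prime P → ∃ x : 𝓞 K, (u : 𝓞 K) - x ^ M ∈ P := by
  let R := (powMonoidHom M : (𝓞 K)ˣ →* (𝓞 K)ˣ).range
  have : Group.FG (𝓞 K)ˣ := Group.fg_iff_monoid_fg.2 inferInstance
  have : Finite ((𝓞 K)ˣ ⧸ R) := CommGroup.finite_of_fg_isMulTorsion _ <| by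
    rintro ⟨u⟩
    exact isOfFinOrder_iff_pow_eq_one.2
      ⟨M, hM, orderOf_dvd_iff_pow_eq_one.1 (orderOf_mk_range_powMonoidHom_dvd M u)⟩
  have h_class : ∀ q : (𝓞 K)ˣ ⧸ R, ∃ N : ℕ, 0 < N ∧
      ∀ u : (𝓞 K)ˣ, (u : (𝓞 K)ˣ ⧸ R) = q → (N : 𝓞 K) ∣ u - 1 →
        ∀ P : Ideal (𝓞 K), Prime P → ∃ x : 𝓞 K, (u : 𝓞 K) - x ^ M ∈ P := fun q ↦ by
    by_contra! hcon
    obtain ⟨u₀, hu₀, -, P, hP, h_bad⟩ := hcon 1 one_pos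
    -- Every unit of the class of `u₀` that is congruent to `1` modulo `P` would make `u₀` an
    -- `M`-th power modulo `P`.
    obtain ⟨u, hu, hd, -⟩ := hcon (Ideal.absNorm P)
      (Nat.pos_of_ne_zero (mt Ideal.absNorm_eq_zero_iff.1 hP.ne_zero))
    obtain ⟨z, hz⟩ : u⁻¹ * u₀ ∈ R := QuotientGroup.eq.1 (hu.trans hu₀.symm)
    have hu₀_eq : (u₀ : 𝓞 K) = u * (z : 𝓞 K) ^ M := by
      rw [← Units.val_pow_eq_pow_val, ← Units.val_mul]
      exact congrArg Units.val (eq_inv_mul_iff_mul_eq.1 hz).symm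
    refine h_bad z ?_
    rw [show (u₀ : 𝓞 K) - (z : 𝓞 K) ^ M = (u - 1) * (z : 𝓞 K) ^ M by rw [hu₀_eq]; ring]
    exact P.mul_mem_right _ (Ideal.mem_of_dvd _ hd (Ideal.absNorm_mem P))
  obtain ⟨N, hN, h⟩ := exists_pos_forall_of_dvd_closed
    (fun q m n hmn h u hu hd ↦ h u hu ((Nat.cast_dvd_cast hmn).trans hd)) h_class
  exact ⟨N, hN, fun u ↦ h u u rfl⟩

lemma exists_pos_forall_natCast_dvd_imp_eq_zero {R : Type*} [CommRing R] [AddGroup.FG R]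
    {T : Set R} (hT : T.Finite) : ∃ N : ℕ, 0 < N ∧ ∀ x ∈ T, (N : R) ∣ x → x = 0 := by
  have : Finite T := hT
  obtain ⟨N, hN, h⟩ := exists_pos_forall_of_dvd_closed
    (p := fun (x : T) N ↦ (N : R) ∣ x → (x : R) = 0)
    (fun x m n hmn h hd ↦ h ((Nat.cast_dvd_cast hmn).trans hd)) fun x ↦ by
      by_contra! hcon
      refine (hcon 1 one_pos).2 (eq_zero_of_forall_exists_nsmul_eq fun m hm ↦ ?_)
      obtain ⟨b, hb⟩ := (hcon m hm).1
      exact ⟨b, by rw [nsmul_eq_mul, hb]⟩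
  exact ⟨N, hN, fun x hx ↦ h ⟨x, hx⟩⟩

lemma dvd_pow_card_units_quotient_sub_one {R : Type*} [CommRing R] (n : R) (v : Rˣ) :
    n ∣ (v : R) ^ Nat.card (R ⧸ Ideal.span {n})ˣ - 1 := by
  rw [← Ideal.mem_span_singleton, ← Ideal.Quotient.eq, map_pow, map_one]
  exact congrArg Units.val
    (pow_card_eq_one'
    (x := Units.map (Ideal.Quotient.mk (Ideal.span {n}) : R →* R ⧸ Ideal.span {n}) v))

theorem exists_pos_forall_dvd_sub_one_imp_exists_pow_eq {m : ℕ} (hm : 0 < m) :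
    ∃ N : ℕ, 0 < N ∧ ∀ u : (𝓞 K)ˣ, (N : 𝓞 K) ∣ u - 1 → ∃ v : (𝓞 K)ˣ, v ^ m = u := by
  have : AddGroup.FG (𝓞 K) := Module.Finite.iff_addGroup_fg.1 inferInstance
  have : Finite (Units.torsion K : Set (𝓞 K)ˣ) := inferInstanceAs (Finite (Units.torsion K))
  obtain ⟨N₀, hN₀, h_sep⟩ := exists_pos_forall_natCast_dvd_imp_eq_zero
    (Set.toFinite ((fun ζ : (𝓞 K)ˣ ↦ (ζ : 𝓞 K) - 1) '' (Units.torsion K : Set (𝓞 K)ˣ)))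
  set w := Units.torsionOrder K
  have hw : 0 < w := Units.torsionOrder_pos K
  have : Finite (𝓞 K ⧸ Ideal.span {(N₀ : 𝓞 K)}) := Ring.HasFiniteQuotients.finiteQuotient
    (by simpa using hN₀.ne')
  set e := Nat.card (𝓞 K ⧸ Ideal.span {(N₀ : 𝓞 K)})ˣ
  have he : 0 < e := Nat.card_pos
  obtain ⟨N₁, hN₁, h_local⟩ := exists_pos_forall_dvd_sub_one_imp_exists_sub_pow_mem (K := K)
    (M := w * (e * m)) (by positivity)
  refine ⟨N₀ * N₁, by positivity, fun u hu ↦ ?_⟩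
  push_cast at hu
  obtain ⟨x, hx⟩ := exists_pow_eq_pow_torsionOrder (by positivity)
    (h_local u ((Dvd.intro_left _ rfl).trans hu))
  -- `u / x ^ (e * m)` is a root of unity congruent to `1` modulo `N₀`, hence equal to `1`.
  have h_tors : u / x ^ (e * m) ∈ Units.torsion K :=
    (CommGroup.mem_torsion _).2 (isOfFinOrder_iff_pow_eq_one.2
      ⟨w, hw, by rw [div_pow, ← pow_mul, mul_comm _ w, hx, div_self']⟩)
  have h_dvd : (N₀ : 𝓞 K) ∣ (u / x ^ (e * m) : (𝓞 K)ˣ) - 1 := by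
    have hx_dvd := dvd_pow_card_units_quotient_sub_one (N₀ : 𝓞 K) (x ^ m)
    rw [← Units.val_pow_eq_pow_val, ← pow_mul, mul_comm m] at hx_dvd
    rw [← (x ^ (e * m)).isUnit.dvd_mul_right, sub_mul, one_mul, ← Units.val_mul, div_mul_cancel,
      ← sub_sub_sub_cancel_right _ _ 1]
    exact dvd_sub ((Dvd.intro _ rfl).trans hu) hx_dvd
  have h_one := h_sep _ ⟨_, h_tors, rfl⟩ h_dvd
  refine ⟨x ^ e, ?_⟩
  rw [← pow_mul]
  exact (div_eq_one.1 (Units.ext (sub_eq_zero.1 h_one))).symm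

end NumberField

section Orders

/-- Chevalley's theorem for the units of `R`: the unit group is finitely generated, and its
subgroup of `m`-th powers contains a principal congruence subgroup, for every `m > 0`. -/
structure HasChevalleyUnits (R : Type*) [CommRing R] : Prop where
  fg_units : Group.FG Rˣ
  exists_pow_eq : ∀ m : ℕ, 0 < m →
    ∃ N : ℕ, 0 < N ∧ ∀ u : Rˣ, (N : R) ∣ u - 1 → ∃ v : Rˣ, v ^ m = u

namespace HasChevalleyUnits

lemma ringOfIntegers (K : Type*) [Field K] [NumberField K] : HasChevalleyUnits (𝓞 K) where
  fg_units := Group.fg_iff_monoid_fg.2 inferInstance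
  exists_pow_eq _ := exists_pos_forall_dvd_sub_one_imp_exists_pow_eq

lemma pi {ι : Type*} [Finite ι] {R : ι → Type*} [∀ i, CommRing (R i)]
    (h : ∀ i, HasChevalleyUnits (R i)) : HasChevalleyUnits (∀ i, R i) where
  fg_units := by
    have := fun i ↦ (h i).fg_units
    exact Group.fg_of_surjective (f := MulEquiv.piUnits.symm.toMonoidHom)
      MulEquiv.piUnits.symm.surjective
  exists_pow_eq m hm := by
    obtain ⟨N, hN, hpow⟩ := exists_pos_forall_of_dvd_closed
      (p := fun i N ↦ ∀ u : (R i)ˣ, (N : R i) ∣ u - 1 → ∃ v : (R i)ˣ, v ^ m = u)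
      (fun i m n hmn h u hd ↦ h u ((Nat.cast_dvd_cast hmn).trans hd))
      fun i ↦ (h i).exists_pow_eq m hm
    refine ⟨N, hN, fun u hu ↦ ?_⟩
    choose v hv using fun i ↦ hpow i (MulEquiv.piUnits u i) (by
      simpa using map_dvd (Pi.evalRingHom R i) hu)
    exact ⟨MulEquiv.piUnits.symm v, by rw [← map_pow, MulEquiv.symm_apply_eq]; exact funext hv⟩

lemma of_injective {R S : Type*} [CommRing R] [CommRing S] (hS : HasChevalleyUnits S)
    {f : R →+* S} (hf : Function.Injective f) : HasChevalleyUnits R := by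
  have := hS.fg_units
  let φ : Additive Rˣ →+ Additive Sˣ := (Units.map (f : R →* S)).toAdditive
  have hφ : Function.Injective φ := Units.map_injective hf
  constructor
  · have : Module.Finite ℤ (Additive Sˣ) := Module.Finite.iff_addGroup_fg.2 inferInstance
    have : Module.Finite ℤ (Additive Rˣ) := Module.Finite.of_injective φ.toIntLinearMap hφ
    exact GroupFG.iff_add_fg.2 (Module.Finite.iff_addGroup_fg.1 inferInstance)
  · intro m hm
    obtain ⟨k, hk, hk_mem⟩ := exists_pos_nsmul_mem_of_nsmul_mem φ.range
    obtain ⟨N, hN, h⟩ := hS.exists_pow_eq (k * m) (by positivity)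
    refine ⟨N, hN, fun u hu ↦ ?_⟩
    obtain ⟨w, hw⟩ := h (Units.map f u) (by simpa using map_dvd f hu)
    obtain ⟨v, hv⟩ := hk_mem (k * m) (Additive.ofMul w) (by positivity) ⟨Additive.ofMul u, hw.symm⟩
    refine ⟨v.toMul, hφ (a₁ := m • v) (a₂ := Additive.ofMul u) ?_⟩
    rw [map_nsmul, hv, ← mul_smul, mul_comm]
    exact hw

lemma of_isDomain (D : Type*) [CommRing D] [IsDomain D] [Module.Finite ℤ D] [CharZero D] :
    HasChevalleyUnits D := by
  have : FaithfulSMul ℤ D := (faithfulSMul_iff_algebraMap_injective ℤ D).2 Int.cast_injective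
  let K := FractionRing D
  let : Algebra ℤ K := Ring.toIntAlgebra K
  have : CharZero K := charZero_of_injective_algebraMap (IsFractionRing.injective D K)
  have : NumberField K :=
    { to_finiteDimensional := Module.Finite.of_isLocalization ℤ D (nonZeroDivisors ℤ) }
  let f : D →+* 𝓞 K := ((algebraMap D K).toIntAlgHom.codRestrict (integralClosure ℤ K) fun x ↦
    (Algebra.IsIntegral.isIntegral (R := ℤ) x).map (algebraMap D K).toIntAlgHom).toRingHom
  exact (ringOfIntegers K).of_injective (f := f) fun a b hab ↦
    IsFractionRing.injective D K (congrArg Subtype.val hab)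

lemma of_isReduced (R : Type*) [CommRing R] [IsReduced R] [Module.Finite ℤ R]
    [IsAddTorsionFree R] : HasChevalleyUnits R := by
  have : IsNoetherianRing R := isNoetherian_of_tower ℤ inferInstance
  have : Finite (minimalPrimes R) := minimalPrimes.finite_of_isNoetherianRing R
  have h_factor : ∀ p : minimalPrimes R, HasChevalleyUnits (R ⧸ (p : Ideal R)) := fun p ↦ by
    have : (p : Ideal R).IsPrime := p.2.1.1
    have : CharZero (R ⧸ (p : Ideal R)) := charZero_of_inj_zero fun n hn ↦ by
      by_contra hn0
      rw [← map_natCast (Ideal.Quotient.mk (p : Ideal R)), Ideal.Quotient.eq_zero_iff_mem] at hn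
      refine notMem_nonZeroDivisors_of_mem_mem_minimalPrimes hn p.2 ?_
      refine mem_nonZeroDivisors_iff_right.2 fun x hx ↦ ?_
      rwa [mul_comm, ← nsmul_eq_mul, nsmul_eq_zero_iff_right hn0] at hx
    exact of_isDomain _
  refine (pi h_factor).of_injective
    (f := RingHom.pi fun p : minimalPrimes R ↦ Ideal.Quotient.mk (p : Ideal R))
    ((injective_iff_map_eq_zero _).2 fun x hx ↦ ?_)
  have hx_mem : x ∈ sInf (⊥ : Ideal R).minimalPrimes := (Submodule.mem_sInf).2 fun p hp ↦
    Ideal.Quotient.eq_zero_iff_mem.1 (congrFun hx ⟨p, hp⟩)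
  rw [Ideal.sInf_minimalPrimes] at hx_mem
  exact (mem_nilradical.1 hx_mem).eq_zero

end HasChevalleyUnits

end Orders

end UnitCongruences

/-! ### Images of crossed homomorphisms -/

section CrossedHomomorphisms

open Polynomial

section IdempotentGenerators

variable {R : Type*} [CommRing R] [IsReduced R] [Algebra.IsIntegral ℤ R]

lemma exists_mul_mul_eq_intCast_mul (y : R) :
    ∃ (s : R) (n : ℤ), n ≠ 0 ∧ s * y * y = n * y := by
  obtain ⟨p, hp, hpy⟩ := Algebra.IsIntegral.isIntegral (R := ℤ) y
  obtain ⟨q, hpq, hq⟩ := Polynomial.exists_eq_pow_rootMultiplicity_mul_and_not_dvd p hp.ne_zero 0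
  set j := p.rootMultiplicity 0
  rw [C_0, sub_zero] at hpq hq
  have hjq : y ^ j * aeval y q = 0 := by
    simpa only [hpq, map_mul, map_pow, aeval_X] using show aeval y p = 0 from hpy
  have hyq : y * aeval y q = 0 := by
    refine eq_zero_of_pow_eq_zero (n := j + 1) ?_
    linear_combination y * aeval y q ^ j * hjq
  have hq_eq : aeval y q = aeval y q.divX * y + (q.coeff 0 : R) := by
    conv_lhs => rw [← Polynomial.divX_mul_X_add q]
    simp
  rw [hq_eq] at hyq
  exact ⟨-aeval y q.divX, q.coeff 0, mt X_dvd_iff.2 hq, by linear_combination -hyq⟩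

-- After inverting `n`, the element `θ / n` is an idempotent generating `I`.
lemma exists_mem_forall_mul_eq_intCast_mul {I : Ideal R} (hI : I.FG) :
    ∃ θ ∈ I, ∃ n : ℤ, n ≠ 0 ∧ ∀ y ∈ I, θ * y = n * y := by
  induction I, hI using Submodule.fg_induction with
  | singleton y =>
    obtain ⟨s, n, hn, h⟩ := exists_mul_mul_eq_intCast_mul y
    refine ⟨s * y, Ideal.mul_mem_left _ _ (Ideal.mem_span_singleton_self y), n, hn, fun x hx ↦ ?_⟩
    obtain ⟨c, rfl⟩ := Ideal.mem_span_singleton.1 hx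
    linear_combination c * h
  | sup I J _ _ hI hJ =>
    obtain ⟨θ, hθ, n, hn, hθ_mul⟩ := hI
    obtain ⟨η, hη, k, hk, hη_mul⟩ := hJ
    refine ⟨k * θ + n * η - θ * η, ?_, n * k, mul_ne_zero hn hk, fun y hy ↦ ?_⟩
    · exact sub_mem (add_mem (Ideal.mul_mem_left _ _ (Ideal.mem_sup_left hθ))
        (Ideal.mul_mem_left _ _ (Ideal.mem_sup_right hη)))
        (Ideal.mul_mem_left _ _ (Ideal.mem_sup_right hη))
    · obtain ⟨a, ha, b, hb, rfl⟩ := Submodule.mem_sup.1 hy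
      push_cast
      linear_combination (k - η) * hθ_mul a ha + (n - θ) * hη_mul b hb

end IdempotentGenerators

section UnitOrbits

variable {R A B C : Type*} [CommRing R] [AddCommGroup A] [AddGroup.FG A] [Group C]

lemma HasChevalleyUnits.isProfinitelyClosed_range [AddGroup.FG R] (hR : HasChevalleyUnits R)
    (ρ : C →* Rˣ) (φ : C →* Multiplicative A) :
    IsProfinitelyClosed (Set.range fun c ↦ ((ρ c : R), (φ c).toAdd)) := by
  rintro ⟨r, a⟩ h
  obtain ⟨u, rfl⟩ : IsUnit r := by
    rw [← Ideal.span_singleton_eq_top, Ideal.eq_top_iff_one]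
    refine isProfinitelyClosed_addSubgroup (Ideal.span {r}).toAddSubgroup 1 fun m hm ↦ ?_
    obtain ⟨_, ⟨c, rfl⟩, z, hz⟩ := h m hm
    have hr : r = ρ c + m • z.1 := congrArg Prod.fst hz
    refine ⟨((ρ c)⁻¹ : Rˣ) * r, Ideal.mul_mem_left _ _ (Ideal.mem_span_singleton_self r),
      -(((ρ c)⁻¹ : Rˣ) * z.1), ?_⟩
    rw [hr, mul_add, Units.inv_mul, mul_smul_comm, smul_neg, add_neg_cancel_right]
  have := hR.fg_units
  let ψ : Additive C →+ Additive Rˣ × A := ρ.toAdditive.prod φ.toAdditiveLeft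
  suffices (Additive.ofMul u, a) ∈ ψ.range by
    obtain ⟨c, hc⟩ := this
    exact ⟨c.toMul, Prod.ext (congrArg (fun x ↦ (x.1.toMul : R)) hc) (congrArg (·.2) hc)⟩
  refine isProfinitelyClosed_addSubgroup ψ.range _ fun m hm ↦ ?_
  obtain ⟨N, hN, hpow⟩ := hR.exists_pow_eq m hm
  obtain ⟨_, ⟨c, rfl⟩, z, hz⟩ := h (m * N) (by positivity)
  have hu : (u : R) = ρ c + (m * N) • z.1 := congrArg Prod.fst hz
  obtain ⟨v, hv⟩ := hpow ((ρ c)⁻¹ * u) ⟨((ρ c)⁻¹ : Rˣ) * m * z.1, by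
    rw [Units.val_mul, hu, mul_add, Units.inv_mul, add_sub_cancel_left, nsmul_eq_mul]
    push_cast
    ring⟩
  refine ⟨ψ (.ofMul c), ⟨_, rfl⟩, (.ofMul v, N • z.2), Prod.ext ?_ ?_⟩
  · exact congrArg Additive.ofMul (eq_inv_mul_iff_mul_eq.1 hv).symm
  · exact (congrArg Prod.snd hz).trans (congrArg (_ + ·) (mul_smul m N z.2))

variable [AddCommGroup B] [Module R B]

lemma exists_injective_quotient_torsionOf (e : B) :
    ∃ f : R ⧸ Ideal.torsionOf R B e →+ B, Function.Injective f ∧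
      ∀ r, f (Ideal.Quotient.mk _ r) = r • e :=
  ⟨((R ∙ e).subtype ∘ₗ (Ideal.quotTorsionOfEquivSpanSingleton R B e).toLinearMap).toAddMonoidHom,
    Subtype.val_injective.comp (Ideal.quotTorsionOfEquivSpanSingleton R B e).injective,
    fun _ ↦ rfl⟩

variable [IsAddTorsionFree B]

lemma isAddTorsionFree_quotient_torsionOf (e : B) :
    IsAddTorsionFree (R ⧸ Ideal.torsionOf R B e) :=
  have ⟨f, hf, _⟩ := exists_injective_quotient_torsionOf (R := R) e
  hf.isAddTorsionFree f

variable [IsReduced R]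

lemma isReduced_quotient_torsionOf [Algebra.IsIntegral ℤ R] (e : B) :
    IsReduced (R ⧸ Ideal.torsionOf R B e) := by
  refine (isReduced_iff_pow_one_lt 2 one_lt_two).2 fun x hx ↦ ?_
  obtain ⟨y, rfl⟩ := Ideal.Quotient.mk_surjective x
  rw [← map_pow, Ideal.Quotient.eq_zero_iff_mem, Ideal.mem_torsionOf_iff] at hx
  rw [Ideal.Quotient.eq_zero_iff_mem, Ideal.mem_torsionOf_iff]
  obtain ⟨s, n, hn, h⟩ := exists_mul_mul_eq_intCast_mul y
  refine (smul_eq_zero_iff_right hn).1 ?_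
  rw [← Int.cast_smul_eq_zsmul R, smul_smul, ← h, mul_assoc, ← sq, mul_smul, hx, smul_zero]

lemma isProfinitelyClosed_range_smul [Module.Finite ℤ R] [AddGroup.FG B] (ρ : C →* Rˣ) (e : B)
    (φ : C →* Multiplicative A) :
    IsProfinitelyClosed (Set.range fun c ↦ (ρ c • e, (φ c).toAdd)) := by
  let S := R ⧸ Ideal.torsionOf R B e
  have : Module.Finite ℤ S := Module.Finite.of_surjective
    (Ideal.Quotient.mk (Ideal.torsionOf R B e)).toAddMonoidHom.toIntLinearMap
    Ideal.Quotient.mk_surjective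
  have : AddGroup.FG S := Module.Finite.iff_addGroup_fg.1 inferInstance
  have := isReduced_quotient_torsionOf (R := R) e
  have := isAddTorsionFree_quotient_torsionOf (R := R) e
  have hS := (HasChevalleyUnits.of_isReduced S).isProfinitelyClosed_range
    ((Units.map (Ideal.Quotient.mk (Ideal.torsionOf R B e) : R →* S)).comp ρ) φ
  obtain ⟨f, hf, hf_mk⟩ := exists_injective_quotient_torsionOf (R := R) e
  convert hS.image (f := f.prodMap (AddMonoidHom.id A)) (hf.prodMap Function.injective_id)
  rw [← Set.range_comp]
  exact congrArg Set.range (funext fun c ↦ Prod.ext (hf_mk _).symm rfl)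

end UnitOrbits

lemma exists_forall_smul_eq_smul_of_mem_span {ι R B : Type*} [CommRing R] [AddCommGroup B]
    [Module R B] {x : ι → R} {b : ι → B} (h : ∀ i j, x i • b j = x j • b i) {θ : R}
    (hθ : θ ∈ Ideal.span (Set.range x)) : ∃ e : B, ∀ i, x i • e = θ • b i := by
  induction hθ using Submodule.span_induction with
  | mem _ hx =>
    obtain ⟨j, rfl⟩ := hx
    exact ⟨b j, fun i ↦ h i j⟩
  | zero => exact ⟨0, fun i ↦ by rw [smul_zero, zero_smul]⟩
  | add θ η _ _ hθ hη =>
    obtain ⟨e, he⟩ := hθ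
    obtain ⟨f, hf⟩ := hη
    exact ⟨e + f, fun i ↦ by rw [smul_add, he, hf, add_smul]⟩
  | smul r θ _ hθ =>
    obtain ⟨e, he⟩ := hθ
    exact ⟨r • e, fun i ↦ by rw [smul_comm, he, smul_smul, smul_eq_mul]⟩

lemma exists_submodule_isAddTorsionFree_finite_quotient (R B : Type*) [CommRing R] [AddCommGroup B]
    [AddGroup.FG B] [Module R B] :
    ∃ N : Submodule R B, IsAddTorsionFree N ∧ Finite (B ⧸ N) := by
  obtain ⟨n, hn, hn_tors⟩ := exists_pos_nsmul_eq_zero_of_isOfFinAddOrder B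
  let N : Submodule R B := LinearMap.range (n • (LinearMap.id : B →ₗ[R] B))
  refine ⟨N, isAddTorsionFree_iff_not_isOfFinAddOrder.2 ?_, ?_⟩
  · rintro ⟨_, b, rfl⟩ hb_ne hb
    obtain ⟨k, hk, hkb⟩ := isOfFinAddOrder_iff_nsmul_eq_zero.1 hb
    refine hb_ne (Subtype.ext (hn_tors b (isOfFinAddOrder_iff_nsmul_eq_zero.2
      ⟨k * n, by positivity, ?_⟩)))
    rw [mul_smul]
    exact congrArg Subtype.val hkb
  · have : AddGroup.FG (B ⧸ N) :=
      AddGroup.fg_of_surjective (f := N.mkQ.toAddMonoidHom) N.mkQ_surjective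
    refine AddCommGroup.finite_of_fg_isAddTorsion _ fun x ↦ ?_
    obtain ⟨b, rfl⟩ := N.mkQ_surjective x
    refine isOfFinAddOrder_iff_nsmul_eq_zero.2 ⟨n, hn, ?_⟩
    rw [← map_nsmul]
    exact (Submodule.Quotient.mk_eq_zero N).2 ⟨b, rfl⟩

/-- A crossed homomorphism (one-cocycle) from `C` to the `R`-module `B`, on which `C` acts through
the units of `R` by means of `ρ`. -/
def IsCrossedHom {R B C : Type*} [Ring R] [AddCommGroup B] [Module R B] [Group C]
    (ρ : C →* Rˣ) (δ : C → B) : Prop :=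
  ∀ g h, δ (g * h) = δ g + ρ g • δ h

namespace IsCrossedHom

section Ring

variable {R B C : Type*} [Ring R] [AddCommGroup B] [Module R B] [Group C] {ρ : C →* Rˣ} {δ : C → B}

lemma map_one (hδ : IsCrossedHom ρ δ) : δ 1 = 0 := by
  simpa using hδ 1 1

lemma map_inv (hδ : IsCrossedHom ρ δ) (g : C) : δ g⁻¹ = -((ρ g)⁻¹ • δ g) := by
  rw [eq_neg_iff_add_eq_zero, ← _root_.map_inv, ← hδ, inv_mul_cancel, hδ.map_one]

lemma map_inv_mul (hδ : IsCrossedHom ρ δ) (g h : C) : δ (g⁻¹ * h) = (ρ g)⁻¹ • (δ h - δ g) := by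
  rw [hδ, hδ.map_inv, _root_.map_inv, smul_sub, neg_add_eq_sub]

lemma linearMap_comp {B' : Type*} [AddCommGroup B'] [Module R B'] (hδ : IsCrossedHom ρ δ)
    (f : B →ₗ[R] B') : IsCrossedHom ρ (f ∘ δ) := fun g h ↦ by
  simp only [Function.comp_apply, hδ g h, map_add, Units.smul_def, map_smul]

/-- The subgroup of elements mapped into a given submodule by a crossed homomorphism. -/
def comapSubgroup (hδ : IsCrossedHom ρ δ) (N : Submodule R B) : Subgroup C where
  carrier := {c | δ c ∈ N}
  one_mem' := by simp only [Set.mem_ofPred_eq, hδ.map_one, zero_mem]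
  mul_mem' {g h} hg hh := by
    simp only [Set.mem_ofPred_eq, hδ g h]
    exact add_mem hg (N.smul_mem _ hh)
  inv_mem' {g} hg := by
    simp only [Set.mem_ofPred_eq, hδ.map_inv]
    exact neg_mem (N.smul_mem _ hg)

lemma finiteIndex_comapSubgroup (hδ : IsCrossedHom ρ δ) (N : Submodule R B) [Finite (B ⧸ N)] :
    (hδ.comapSubgroup N).FiniteIndex := by
  suffices Finite (C ⧸ hδ.comapSubgroup N) from Subgroup.finiteIndex_of_finite_quotient
  refine Finite.of_injective (fun q ↦ N.mkQ (δ q.out)) fun p q hpq ↦ ?_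
  rw [← p.out_eq', ← q.out_eq', QuotientGroup.eq]
  change δ _ ∈ N
  rw [hδ.map_inv_mul]
  exact N.smul_mem _ ((Submodule.Quotient.eq N).1 hpq.symm)

lemma isProfinitelyClosed_range_of_finiteIndex (hδ : IsCrossedHom ρ δ) (C' : Subgroup C)
    [C'.FiniteIndex] (h : IsProfinitelyClosed (δ '' C')) : IsProfinitelyClosed (Set.range δ) := by
  have h_cosets : Set.range δ = ⋃ q : C ⧸ C', {a | DistribSMul.toAddMonoidHom B (ρ q.out)⁻¹ a +
      -((ρ q.out)⁻¹ • δ q.out) ∈ δ '' C'} := by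
    ext a
    simp only [Set.mem_iUnion, Set.mem_ofPred_eq, DistribSMul.toAddMonoidHom_apply,
      ← sub_eq_add_neg, ← smul_sub]
    constructor
    · rintro ⟨c, rfl⟩
      let q : C ⧸ C' := c
      exact ⟨q, q.out⁻¹ * c, QuotientGroup.eq.1 q.out_eq', hδ.map_inv_mul _ _⟩
    · rintro ⟨q, l, -, hl⟩
      exact ⟨q.out * l, by rw [hδ, hl, smul_inv_smul, add_sub_cancel]⟩
  rw [h_cosets]
  exact .iUnion fun q ↦ h.preimage_affine _ _

end Ring

section CommRing

variable {R B C : Type*} [CommRing R] [IsReduced R] [Module.Finite ℤ R] [AddCommGroup B]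
  [AddGroup.FG B] [Module R B] [Group C] {ρ : C →* Rˣ} {δ : C → B}

lemma isProfinitelyClosed_range_of_isAddTorsionFree [IsAddTorsionFree B] (hδ : IsCrossedHom ρ δ)
    (hcomm : ∀ g h, δ (g * h) = δ (h * g)) : IsProfinitelyClosed (Set.range δ) := by
  have : IsNoetherianRing R := isNoetherian_of_tower ℤ inferInstance
  obtain ⟨θ, hθ, n, hn, hθ_mul⟩ := exists_mem_forall_mul_eq_intCast_mul
    (IsNoetherian.noetherian (Ideal.span (Set.range fun c ↦ (ρ c : R) - 1)))
  obtain ⟨e, he⟩ := exists_forall_smul_eq_smul_of_mem_span (b := δ) (fun g h ↦ by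
    have := hcomm g h
    rw [hδ, hδ, add_comm (δ g), add_comm (δ h), ← sub_eq_sub_iff_add_eq_add] at this
    simpa only [sub_smul, one_smul, Units.smul_def] using this) hθ
  have he_smul : ∀ c, ρ c • e = θ • δ c + e := fun c ↦ by
    rw [← he, sub_smul, one_smul, sub_add_cancel, Units.smul_def]
  let φ : C →* Multiplicative B := MonoidHom.mk' (fun c ↦ .ofAdd (((n : R) - θ) • δ c))
    fun g h ↦ congrArg Multiplicative.ofAdd <| by
      have := hθ_mul _ (Ideal.subset_span ⟨g, rfl⟩)
      rw [hδ, smul_add, Units.smul_def, smul_smul,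
        show ((n : R) - θ) * ρ g = n - θ by linear_combination -this]
      rfl
  let f : B →+ B × B := (DistribSMul.toAddMonoidHom B θ).prod
    (DistribSMul.toAddMonoidHom B ((n : R) - θ))
  convert (isProfinitelyClosed_range_smul ρ e φ).preimage_affine f (e, 0) using 1
  ext a
  constructor
  · rintro ⟨c, rfl⟩
    exact ⟨c, Prod.ext (he_smul c) (add_zero _).symm⟩
  · rintro ⟨c, hc⟩
    have hc_fst : θ • δ c = θ • a :=
      add_right_cancel ((he_smul c).symm.trans (congrArg Prod.fst hc))
    have hc_snd : ((n : R) - θ) • δ c = ((n : R) - θ) • a :=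
      (congrArg Prod.snd hc).trans (add_zero _)
    refine ⟨c, zsmul_right_injective hn ?_⟩
    simpa only [sub_smul, hc_fst, sub_left_inj, Int.cast_smul_eq_zsmul] using hc_snd

lemma isProfinitelyClosed_range_of_map_mul_comm (hδ : IsCrossedHom ρ δ)
    (hcomm : ∀ g h, δ (g * h) = δ (h * g)) : IsProfinitelyClosed (Set.range δ) := by
  obtain ⟨N, _, _⟩ := exists_submodule_isAddTorsionFree_finite_quotient R B
  have : Module.Finite ℤ B := Module.Finite.iff_addGroup_fg.2 inferInstance
  have : AddGroup.FG N := Module.Finite.iff_addGroup_fg.1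
    (Module.Finite.of_injective N.subtype.toAddMonoidHom.toIntLinearMap N.subtype_injective)
  let C' := hδ.comapSubgroup N
  let δ' : C' → N := fun c ↦ ⟨δ c, c.2⟩
  have hδ' : IsCrossedHom (ρ.comp C'.subtype) δ' := fun g h ↦ Subtype.ext (hδ g h)
  have h_closed := (hδ'.isProfinitelyClosed_range_of_isAddTorsionFree fun g h ↦
    Subtype.ext (hcomm g h)).image (f := N.subtype.toAddMonoidHom) N.subtype_injective
  have := hδ.finiteIndex_comapSubgroup N
  refine hδ.isProfinitelyClosed_range_of_finiteIndex C' ?_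
  convert h_closed using 1
  rw [← Set.range_comp, Set.image_eq_range]
  rfl

end CommRing

section Ring

variable {R B C : Type*} [Ring R] [AddCommGroup B] [Module R B] [Group C] {ρ : C →* Rˣ} {δ : C → B}

/-- The image of the kernel of `ρ` under a crossed homomorphism, an `R`-submodule as soon as the
units `ρ c` generate `R` additively. -/
def mapKer (hδ : IsCrossedHom ρ δ)
    (hρ : AddSubgroup.closure (Set.range fun c ↦ (ρ c : R)) = ⊤) : Submodule R B :=
  have h_ker : ∀ l ∈ ρ.ker, ∀ b, ρ l • b = b := fun l hl b ↦ by
    rw [MonoidHom.mem_ker.1 hl, one_smul]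
  let D : AddSubgroup B :=
    { carrier := δ '' ρ.ker
      zero_mem' := ⟨1, one_mem _, hδ.map_one⟩
      add_mem' := by
        rintro _ _ ⟨l, hl, rfl⟩ ⟨k, hk, rfl⟩
        exact ⟨l * k, mul_mem hl hk, by rw [hδ, h_ker l hl]⟩
      neg_mem' := by
        rintro _ ⟨l, hl, rfl⟩
        exact ⟨l⁻¹, inv_mem hl, by rw [hδ.map_inv, ← _root_.map_inv, h_ker _ (inv_mem hl)]⟩ }
  have h_conj : ∀ c, ∀ b ∈ D, ρ c • b ∈ D := by
    rintro c _ ⟨l, hl, rfl⟩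
    refine ⟨c * l * c⁻¹, (MonoidHom.normal_ker ρ).conj_mem l hl c, ?_⟩
    rw [hδ, hδ, hδ.map_inv, map_mul, MonoidHom.mem_ker.1 hl, mul_one, smul_neg, smul_inv_smul]
    abel
  { D with
    smul_mem' r b hb := by
      have hr : r ∈ AddSubgroup.closure (Set.range fun c ↦ (ρ c : R)) := by rw [hρ]; trivial
      change r • b ∈ D
      induction hr using AddSubgroup.closure_induction with
      | mem _ hx =>
        obtain ⟨c, rfl⟩ := hx
        exact h_conj c b hb
      | zero => simp only [zero_smul, zero_mem]
      | add x y _ _ hx hy => simpa only [add_smul] using add_mem hx hy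
      | neg x _ hx => simpa only [neg_smul] using neg_mem hx }

end Ring

-- Modulo the image of `ker ρ`, which contains that of the commutators, the crossed homomorphism
-- takes the same value at `g * h` and `h * g`.
theorem isProfinitelyClosed_range {R B C : Type*} [CommRing R] [IsReduced R] [Module.Finite ℤ R]
    [AddCommGroup B] [AddGroup.FG B] [Module R B] [Group C] {ρ : C →* Rˣ} {δ : C → B}
    (hδ : IsCrossedHom ρ δ) (hρ : AddSubgroup.closure (Set.range fun c ↦ (ρ c : R)) = ⊤) :
    IsProfinitelyClosed (Set.range δ) := by
  let D := hδ.mapKer hρ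
  have : AddGroup.FG (B ⧸ D) :=
    AddGroup.fg_of_surjective (f := D.mkQ.toAddMonoidHom) D.mkQ_surjective
  have hcomm : ∀ g h, (D.mkQ ∘ δ) (g * h) = (D.mkQ ∘ δ) (h * g) := fun g h ↦ by
    have h_ker : g * h * (h * g)⁻¹ ∈ ρ.ker := by
      rw [MonoidHom.mem_ker, map_mul, _root_.map_inv, map_mul, map_mul, mul_comm (ρ h),
        mul_inv_cancel]
    have h_eq : δ (g * h) = δ (g * h * (h * g)⁻¹) + δ (h * g) := by
      conv_lhs =>
        rw [← inv_mul_cancel_right (g * h) (h * g), hδ, MonoidHom.mem_ker.1 h_ker, one_smul]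
    exact (Submodule.Quotient.eq D).2 ⟨_, h_ker, eq_sub_of_add_eq h_eq.symm⟩
  have h_quot := (hδ.linearMap_comp D.mkQ).isProfinitelyClosed_range_of_map_mul_comm hcomm
  convert h_quot.preimage_affine D.mkQ.toAddMonoidHom 0 using 1
  ext a
  constructor
  · rintro ⟨c, rfl⟩
    exact ⟨c, (add_zero _).symm⟩
  · rintro ⟨c, hc⟩
    have hc_mem : a - δ c ∈ D := (Submodule.Quotient.eq D).1 (hc.trans (add_zero _)).symm
    obtain ⟨l, -, hl⟩ := D.smul_mem ((ρ c)⁻¹ : Rˣ) hc_mem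
    exact ⟨c * l, by rw [hδ, hl, ← Units.smul_def, smul_inv_smul, add_sub_cancel]⟩

end IsCrossedHom

end CrossedHomomorphisms

/-! ### Polycyclic groups -/

section Polycyclic

variable {G : Type*} [Group G]

lemma isCyclic_quotient_of_sup_zpowers_eq_top {N : Subgroup G} [N.Normal] {x : G}
    (h : N ⊔ Subgroup.zpowers x = ⊤) : IsCyclic (G ⧸ N) := by
  refine isCyclic_iff_exists_zpowers_eq_top.2 ⟨x, ?_⟩
  have h_map := congrArg (Subgroup.map (QuotientGroup.mk' N)) h
  rwa [Subgroup.map_sup, QuotientGroup.map_mk'_self, bot_sup_eq, MonoidHom.map_zpowers,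
    Subgroup.map_top_of_surjective _ (QuotientGroup.mk'_surjective N)] at h_map

theorem IsPolycyclic.subgroup_induction (hG : IsPolycyclic G) {motive : Subgroup G → Prop}
    (bot : motive ⊥)
    (cyclic : ∀ (H K : Subgroup G) (_ : H ≤ K) (_ : (H.subgroupOf K).Normal),
      IsCyclic (K ⧸ H.subgroupOf K) → motive H → motive K) : motive ⊤ := by
  obtain ⟨n, s, h_zero, h_last, h_succ⟩ := hG
  rw [← h_last]
  induction Fin.last n using Fin.induction with
  | zero => rwa [h_zero]
  | succ i ih =>
    obtain ⟨hle, h_normal, x, hx⟩ := h_succ i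
    exact cyclic _ _ hle h_normal (isCyclic_quotient_of_sup_zpowers_eq_top hx) ih

theorem IsPolycyclic.of_surjective {G' : Type*} [Group G'] (hG : IsPolycyclic G) {f : G →* G'}
    (hf : Function.Surjective f) : IsPolycyclic G' := by
  obtain ⟨n, s, h_zero, h_last, h_succ⟩ := hG
  refine ⟨n, fun i ↦ (s i).map f, by simp only [h_zero, Subgroup.map_bot],
    by simp only [h_last, Subgroup.map_top_of_surjective f hf], fun i ↦ ?_⟩
  obtain ⟨hle, h_normal, x, hx⟩ := h_succ i
  let φ : s i.succ →* (s i.succ).map f := f.subgroupMap (s i.succ)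
  have hφ : Function.Surjective φ := f.subgroupMap_surjective (s i.succ)
  have h_map : ((s i.castSucc).subgroupOf (s i.succ)).map φ =
      ((s i.castSucc).map f).subgroupOf ((s i.succ).map f) := by
    apply Subgroup.map_injective ((s i.succ).map f).subtype_injective
    rw [Subgroup.map_map, Subgroup.map_subgroupOf_eq_of_le (Subgroup.map_mono hle)]
    conv_rhs => rw [← Subgroup.map_subgroupOf_eq_of_le hle, Subgroup.map_map]
    rfl
  refine ⟨Subgroup.map_mono hle, h_map ▸ h_normal.map φ hφ, φ x, ?_⟩
  rw [← h_map, ← MonoidHom.map_zpowers, ← Subgroup.map_sup, hx,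
    Subgroup.map_top_of_surjective φ hφ]

theorem IsPolycyclic.isSolvable (hG : IsPolycyclic G) : Group.IsSolvable G := by
  suffices Group.IsSolvable (⊤ : Subgroup G) from
    Group.isSolvable_of_surjective (f := (⊤ : Subgroup G).subtype) fun g ↦ ⟨⟨g, trivial⟩, rfl⟩
  refine hG.subgroup_induction (motive := fun K ↦ Group.IsSolvable K) inferInstance
    fun H K hle _ _ ih ↦ ?_
  have : Group.IsSolvable (K ⧸ H.subgroupOf K) :=
    Group.isSolvable_of_comm IsCyclic.isMulCommutative.is_comm.comm
  refine Group.isSolvable_of_ker_le_range (Subgroup.inclusion hle)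
    (QuotientGroup.mk' (H.subgroupOf K)) ?_
  rw [QuotientGroup.ker_mk', Subgroup.inclusion_range]

lemma subgroup_fg_of_fg_inf_ker_of_fg_map {G' : Type*} [Group G'] (f : G →* G') {L : Subgroup G}
    (h_ker : (L ⊓ f.ker).FG) (h_map : (L.map f).FG) : L.FG := by
  classical
  obtain ⟨T, hT⟩ := h_map
  have h_lift : ∀ t ∈ T, ∃ l ∈ L, f l = t := fun t ht ↦
    Subgroup.mem_map.1 (hT ▸ Subgroup.subset_closure ht)
  choose! lift h_lift_mem h_lift_map using h_lift
  suffices h_gen : L = L ⊓ f.ker ⊔ Subgroup.closure (T.image lift) by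
    rw [h_gen]
    exact h_ker.sup ⟨_, rfl⟩
  have h_closure : Subgroup.closure (T.image lift : Set G) ≤ L := by
    rw [Subgroup.closure_le]
    intro g hg
    obtain ⟨t, ht, rfl⟩ := Finset.mem_image.1 hg
    exact h_lift_mem t ht
  refine le_antisymm (fun l hl ↦ ?_) (sup_le inf_le_left h_closure)
  have h_map_le : L.map f ≤ (Subgroup.closure (T.image lift : Set G)).map f := by
    rw [← hT, Subgroup.closure_le]
    exact fun t ht ↦ ⟨lift t, Subgroup.subset_closure (Finset.mem_image_of_mem _ ht),
      h_lift_map t ht⟩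
  obtain ⟨c, hc, hcl⟩ := h_map_le ⟨l, hl, rfl⟩
  rw [← div_mul_cancel l c]
  refine Subgroup.mul_mem_sup ⟨L.div_mem hl (h_closure hc), f.mem_ker.2 ?_⟩ hc
  rw [map_div, hcl, div_self']

lemma subgroupOf_fg_iff {H K : Subgroup G} (h : H ≤ K) : (H.subgroupOf K).FG ↔ H.FG := by
  rw [← Group.fg_iff_subgroup_fg, ← Group.fg_iff_subgroup_fg]
  let e := Subgroup.subgroupOfEquivOfLe h
  exact ⟨fun _ ↦ Group.fg_of_surjective (f := e.toMonoidHom) e.surjective,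
    fun _ ↦ Group.fg_of_surjective (f := e.symm.toMonoidHom) e.symm.surjective⟩

theorem IsPolycyclic.fg_subgroup (hG : IsPolycyclic G) (L : Subgroup G) : L.FG := by
  suffices ∀ L ≤ (⊤ : Subgroup G), L.FG from this L le_top
  refine hG.subgroup_induction (motive := fun K ↦ ∀ L ≤ K, L.FG)
    (fun L hL ↦ le_bot_iff.1 hL ▸ Subgroup.FG.bot) fun H K _ _ _ ih L hL ↦ ?_
  rw [← subgroupOf_fg_iff hL]
  refine subgroup_fg_of_fg_inf_ker_of_fg_map (QuotientGroup.mk' (H.subgroupOf K)) ?_ ?_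
  · rw [QuotientGroup.ker_mk', Subgroup.subgroupOf, Subgroup.subgroupOf, ← Subgroup.comap_inf]
    exact (subgroupOf_fg_iff (inf_le_left.trans hL)).2 (ih _ inf_le_right)
  · obtain ⟨x, hx⟩ := Subgroup.isCyclic_iff_exists_zpowers_eq_top _ |>.1
      (inferInstance : IsCyclic ((L.subgroupOf K).map (QuotientGroup.mk' (H.subgroupOf K))))
    exact ⟨{x}, by rw [Finset.coe_singleton, ← Subgroup.zpowers_eq_closure, hx]⟩

theorem IsPolycyclic.wellFoundedGT_subgroup (hG : IsPolycyclic G) : WellFoundedGT (Subgroup G) := by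
  rw [wellFoundedGT_iff_monotone_chain_condition]
  intro chain
  obtain ⟨S, hS⟩ := hG.fg_subgroup (⨆ n, chain n)
  have h_mem : ∀ s ∈ S, ∃ n, s ∈ chain n := fun s hs ↦
    (Subgroup.mem_iSup_of_directed chain.monotone.directed_le).1 (hS ▸ Subgroup.subset_closure hs)
  choose! index h_index using h_mem
  refine ⟨S.sup index, fun m hm ↦ le_antisymm (chain.monotone hm) ?_⟩
  refine (le_iSup chain m).trans ?_
  rw [← hS, Subgroup.closure_le]
  exact fun s hs ↦ chain.monotone (Finset.le_sup hs) (h_index s hs)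

lemma exists_characteristic_finiteIndex_le [Group.FG G] (H : Subgroup G) [H.FiniteIndex] :
    ∃ N ≤ H, N.FiniteIndex ∧ N.Characteristic := by
  have h_finite : Finite (G →* Equiv.Perm (G ⧸ H)) := by
    obtain ⟨S, hS⟩ := Group.FG.out (G := G)
    refine Finite.of_injective (fun (f : G →* Equiv.Perm (G ⧸ H)) (s : S) ↦ f s) fun f g hfg ↦ ?_
    exact MonoidHom.eq_of_eqOn_dense hS fun s hs ↦ congrFun hfg ⟨s, hs⟩
  refine ⟨⨅ f : G →* Equiv.Perm (G ⧸ H), f.ker, ?_,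
    Subgroup.finiteIndex_iInf fun f ↦ inferInstance, ?_⟩
  · refine (iInf_le _ (MulAction.toPermHom G (G ⧸ H))).trans ?_
    rw [← Subgroup.normalCore_eq_ker]
    exact H.normalCore_le
  · rw [Subgroup.characteristic_iff_le_comap]
    intro φ g hg
    rw [Subgroup.mem_comap, Subgroup.mem_iInf]
    exact fun f ↦ Subgroup.mem_iInf.1 hg (f.comp φ.toMonoidHom)

end Polycyclic

/-! ### The Lie–Kolchin–Malcev theorem -/

section LieKolchin

variable {k G V : Type*} [Field k] [Group G] [AddCommGroup V] [Module k V]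
  (ρ : Representation k G V)

/-- The subspace on which a subgroup `N` acts through the character `χ`. -/
def weightSpace (N : Subgroup G) (χ : N →* k) : Submodule k V :=
  ⨅ n : N, Module.End.eigenspace (ρ n) (χ n)

/-- The stabilizer of the line spanned by `v`; it is the whole group when `v = 0`. -/
def lineStabilizer (v : V) : Subgroup G where
  carrier := {g | ∃ c : kˣ, ρ g v = (c : k) • v}
  one_mem' := ⟨1, by rw [map_one, Module.End.one_apply, Units.val_one, one_smul]⟩
  mul_mem' := by
    rintro g h ⟨c, hc⟩ ⟨d, hd⟩
    exact ⟨d * c, by rw [map_mul, Module.End.mul_apply, hd, map_smul, hc, Units.val_mul, mul_smul]⟩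
  inv_mem' := by
    rintro g ⟨c, hc⟩
    exact ⟨c⁻¹, by
      rw [← Units.smul_def, eq_inv_smul_iff, Units.smul_def, ← map_smul, ← hc,
        Representation.inv_self_apply]⟩

variable {ρ}

lemma mem_weightSpace_iff {N : Subgroup G} {χ : N →* k} {v : V} :
    v ∈ weightSpace ρ N χ ↔ ∀ n : N, ρ n v = χ n • v := by
  simp only [weightSpace, Submodule.mem_iInf, Module.End.mem_eigenspace_iff]

lemma le_lineStabilizer_of_mem_weightSpace {N : Subgroup G} {χ : N →* k} {v : V}
    (hv : v ∈ weightSpace ρ N χ) : N ≤ lineStabilizer ρ v :=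
  fun n hn ↦ ⟨χ.toHomUnits ⟨n, hn⟩, mem_weightSpace_iff.1 hv ⟨n, hn⟩⟩

lemma exists_mem_weightSpace_of_le_lineStabilizer {N : Subgroup G} {v : V} (hv : v ≠ 0)
    (hN : N ≤ lineStabilizer ρ v) : ∃ χ : N →* k, v ∈ weightSpace ρ N χ := by
  choose c hc using fun n : N ↦ hN n.2
  have h_inj := smul_left_injective k hv
  refine ⟨⟨⟨fun n ↦ c n, h_inj ?_⟩, fun m n ↦ h_inj ?_⟩, mem_weightSpace_iff.2 hc⟩
  · simp only [← hc, Subgroup.coe_one, map_one, Module.End.one_apply, one_smul]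
  · simp only [mul_comm (c m : k), mul_smul, ← hc, ← map_smul,
      Subgroup.coe_mul, map_mul, Module.End.mul_apply]

lemma mem_lineStabilizer_of_hasEigenvector {g : G} {c : k} {v : V}
    (hv : Module.End.HasEigenvector (ρ g) c v) : g ∈ lineStabilizer ρ v := by
  refine ⟨Units.mk0 c fun hc ↦ hv.2 ?_, hv.apply_eq_smul⟩
  rw [← Representation.inv_self_apply ρ g v, hv.apply_eq_smul, hc, zero_smul, map_zero]

lemma apply_mul_comm_of_mem_lineStabilizer {v : V} {g h : G} (hg : g ∈ lineStabilizer ρ v)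
    (hh : h ∈ lineStabilizer ρ v) : ρ (g * h) v = ρ (h * g) v := by
  obtain ⟨⟨c, hc⟩, ⟨d, hd⟩⟩ := And.intro hg hh
  simp only [map_mul, Module.End.mul_apply, hc, hd, map_smul, smul_comm (c : k) (d : k)]

-- Apply a functional separating `v i` from `0` and use Dedekind's independence of characters.
lemma linearIndependent_of_mem_weightSpace {ι : Type*} {N : Subgroup G} {χ : ι → N →* k}
    (hχ : Function.Injective χ) {v : ι → V} (hv : ∀ i, v i ≠ 0)
    (hmem : ∀ i, v i ∈ weightSpace ρ N (χ i)) : LinearIndependent k v := by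
  rw [linearIndependent_iff']
  intro s c hc i hi
  obtain ⟨l, hl⟩ : ∃ l : Module.Dual k V, l (v i) ≠ 0 := by
    simpa only [ne_eq, not_forall] using mt (Module.forall_dual_apply_eq_zero_iff k (v i)).1 (hv i)
  have h_sum : ∑ j ∈ s, (c j * l (v j)) • (χ j : N → k) = 0 := by
    funext n
    have h_apply : l (ρ n (∑ j ∈ s, c j • v j)) = 0 := by rw [hc, map_zero, map_zero]
    simpa only [map_sum, map_smul, mem_weightSpace_iff.1 (hmem _) n, Finset.sum_apply,
      Pi.smul_apply, smul_eq_mul, mul_assoc, mul_comm (l _), Pi.zero_apply] using h_apply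
  have h_indep := linearIndependent_iff'.1 ((linearIndependent_monoidHom N k).comp χ hχ)
  exact (mul_eq_zero.1 (h_indep s _ h_sum i hi)).resolve_right hl

lemma finite_setOf_weightSpace_ne_bot [FiniteDimensional k V] (N : Subgroup G) :
    {χ : N →* k | weightSpace ρ N χ ≠ ⊥}.Finite := by
  choose v hv_mem hv using fun χ : {χ : N →* k | weightSpace ρ N χ ≠ ⊥} ↦
    Submodule.exists_mem_ne_zero_of_ne_bot χ.2
  exact (linearIndependent_of_mem_weightSpace Subtype.val_injective hv hv_mem).finite

lemma apply_mem_weightSpace_conj {N : Subgroup G} [N.Normal] {χ : N →* k} {v : V} (g : G)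
    (hv : v ∈ weightSpace ρ N χ) :
    ρ g v ∈ weightSpace ρ N (χ.comp (MulAut.conjNormal g⁻¹ : MulAut N).toMonoidHom) := by
  refine mem_weightSpace_iff.2 fun n ↦ ?_
  have h_conj := mem_weightSpace_iff.1 hv (MulAut.conjNormal g⁻¹ n)
  change _ = χ (MulAut.conjNormal g⁻¹ n) • _
  rw [← map_smul, ← h_conj]
  simp only [← Module.End.mul_apply, ← map_mul, MulAut.conjNormal_apply, inv_inv, mul_assoc,
    mul_inv_cancel_left]

lemma exists_pow_apply_mem_weightSpace [FiniteDimensional k V] {N : Subgroup G} [N.Normal]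
    {χ : N →* k} (hχ : weightSpace ρ N χ ≠ ⊥) (x : G) :
    ∃ m, 0 < m ∧ ∀ v ∈ weightSpace ρ N χ, ρ (x ^ m) v ∈ weightSpace ρ N χ := by
  let conj (i : ℕ) : N →* k := χ.comp (MulAut.conjNormal (x ^ i)⁻¹ : MulAut N).toMonoidHom
  obtain ⟨v, hv, hv_ne⟩ := Submodule.exists_mem_ne_zero_of_ne_bot hχ
  have h_conj_ne (i : ℕ) : weightSpace ρ N (conj i) ≠ ⊥ :=
    (Submodule.ne_bot_iff _).2 ⟨ρ (x ^ i) v, apply_mem_weightSpace_conj (x ^ i) hv,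
      (map_ne_zero_iff _ (ρ.apply_bijective (x ^ i)).injective).2 hv_ne⟩
  obtain ⟨i, j, hij, h_eq⟩ :=
    Set.Finite.exists_lt_map_eq_of_forall_mem h_conj_ne (finite_setOf_weightSpace_ne_bot N)
  refine ⟨j - i, by lia, fun w hw ↦ ?_⟩
  suffices conj (j - i) = χ from this ▸ apply_mem_weightSpace_conj (x ^ (j - i)) hw
  ext n
  have h_n := DFunLike.congr_fun h_eq (MulAut.conjNormal (x ^ i) n)
  change χ (MulAut.conjNormal (x ^ i)⁻¹ _) = χ (MulAut.conjNormal (x ^ j)⁻¹ _) at h_n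
  rw [← MulAut.mul_apply, ← MulAut.mul_apply, ← map_mul, ← map_mul, inv_mul_cancel, map_one,
    MulAut.one_apply, ← Nat.add_sub_of_le hij.le, pow_add, mul_inv_rev,
    inv_mul_cancel_right] at h_n
  exact h_n.symm

lemma finiteIndex_of_pow_mem {H S : Subgroup G} [H.Normal] {x : G} {m : ℕ} (hm : 0 < m)
    (hx : Subgroup.zpowers (x : G ⧸ H) = ⊤) (hH : (S.subgroupOf H).FiniteIndex)
    (hS : x ^ m ∈ S) : S.FiniteIndex := by
  suffices Function.Surjective fun p : Fin m × (H ⧸ S.subgroupOf H) ↦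
      (((x ^ (p.1 : ℕ) * p.2.out : G)) : G ⧸ S) by
    have := Finite.of_surjective _ this
    exact Subgroup.finiteIndex_of_finite_quotient
  intro q
  obtain ⟨g, rfl⟩ := QuotientGroup.mk_surjective q
  obtain ⟨n, hn⟩ : (g : G ⧸ H) ∈ Subgroup.zpowers (x : G ⧸ H) := hx ▸ Subgroup.mem_top _
  obtain ⟨r, hr⟩ := Int.eq_ofNat_of_zero_le (Int.emod_nonneg n (b := m) (by lia))
  have hrm : r < m := by have := Int.emod_lt_of_pos n (b := m) (by lia); lia
  have hh : (x ^ r)⁻¹ * g * ((x ^ m) ^ (n / m))⁻¹ ∈ H := by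
    rw [← QuotientGroup.eq_one_iff, QuotientGroup.mk_mul, QuotientGroup.mk_mul, ← hn]
    simp only [QuotientGroup.mk_inv, QuotientGroup.mk_zpow, QuotientGroup.mk_pow]
    rw [← zpow_natCast, ← zpow_natCast, ← zpow_mul, ← zpow_neg, ← zpow_neg, ← zpow_add, ← zpow_add,
      ← hr, ← zpow_zero (x : G ⧸ H)]
    congr 1
    have := Int.mul_ediv_add_emod n m
    lia
  refine ⟨⟨⟨r, hrm⟩, (⟨_, hh⟩ : H)⟩, QuotientGroup.eq.2 ?_⟩
  have h_out := QuotientGroup.eq.1 (QuotientGroup.out_eq' ((⟨_, hh⟩ : H) : H ⧸ S.subgroupOf H))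
  rw [← mul_mem_cancel_right (S.inv_mem (S.zpow_mem hS (n / m)))]
  simpa [Subgroup.mem_subgroupOf, mul_assoc] using h_out

theorem exists_finiteIndex_lineStabilizer_of_isCyclic_quotient [IsAlgClosed k]
    [FiniteDimensional k V] {H : Subgroup G} [H.Normal] [IsCyclic (G ⧸ H)] [Group.FG H] {v : V}
    (hv : v ≠ 0) (hH : ((lineStabilizer ρ v).subgroupOf H).FiniteIndex) :
    ∃ w, w ≠ 0 ∧ (lineStabilizer ρ w).FiniteIndex := by
  obtain ⟨N, hN, hN_index, hN_char⟩ :=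
    exists_characteristic_finiteIndex_le ((lineStabilizer ρ v).subgroupOf H)
  obtain ⟨χ, hχ⟩ := exists_mem_weightSpace_of_le_lineStabilizer (N := N.map H.subtype) hv
    (Subgroup.map_le_iff_le_comap.2 hN)
  obtain ⟨q, hq⟩ := isCyclic_iff_exists_zpowers_eq_top.1 (inferInstance : IsCyclic (G ⧸ H))
  obtain ⟨x, rfl⟩ := QuotientGroup.mk_surjective q
  obtain ⟨m, hm, hx⟩ := exists_pow_apply_mem_weightSpace ((Submodule.ne_bot_iff _).2 ⟨v, hχ, hv⟩) x
  have : Nontrivial (weightSpace ρ (N.map H.subtype) χ) := ⟨⟨v, hχ⟩, 0, by simpa using hv⟩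
  obtain ⟨c, hc⟩ := Module.End.exists_eigenvalue ((ρ (x ^ m)).restrict hx)
  obtain ⟨w, hw⟩ := hc.exists_hasEigenvector
  refine ⟨w, by simpa using hw.2, finiteIndex_of_pow_mem (H := H) hm hq ?_ ?_⟩
  · refine Subgroup.finiteIndex_of_le (H := N) fun n hn ↦ ?_
    exact le_lineStabilizer_of_mem_weightSpace w.2 (Subgroup.mem_map_of_mem H.subtype hn)
  · exact mem_lineStabilizer_of_hasEigenvector 
      ⟨Module.End.mem_eigenspace_iff.2 (congrArg Subtype.val hw.apply_eq_smul), by simpa using hw.2⟩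

lemma lineStabilizer_comp_subtype (K : Subgroup G) (v : V) :
    lineStabilizer (ρ.comp K.subtype : Representation k K V) v =
      (lineStabilizer ρ v).subgroupOf K :=
  rfl

theorem IsPolycyclic.exists_finiteIndex_lineStabilizer [IsAlgClosed k] [FiniteDimensional k V]
    [Nontrivial V] (hG : IsPolycyclic G) (ρ : Representation k G V) :
    ∃ v, v ≠ 0 ∧ (lineStabilizer ρ v).FiniteIndex := by
  suffices ∃ v, v ≠ 0 ∧ (lineStabilizer ρ v).relIndex ⊤ ≠ 0 by
    obtain ⟨v, hv, h_index⟩ := this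
    exact ⟨v, hv, ⟨(lineStabilizer ρ v).relIndex_top_right ▸ h_index⟩⟩
  refine hG.subgroup_induction
    (motive := fun K ↦ ∃ v, v ≠ 0 ∧ (lineStabilizer ρ v).relIndex K ≠ 0) ?_ ?_
  · obtain ⟨v, hv⟩ := exists_ne (0 : V)
    exact ⟨v, hv, by rw [Subgroup.relIndex_bot_right]; exact one_ne_zero⟩
  · rintro H K hle _ _ ⟨v, hv, hH⟩
    have : Group.FG (H.subgroupOf K) :=
      (Group.fg_iff_subgroup_fg _).2 ((subgroupOf_fg_iff hle).2 (hG.fg_subgroup H))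
    have hH' : ((lineStabilizer (ρ.comp K.subtype : Representation k K V) v).subgroupOf
        (H.subgroupOf K)).FiniteIndex := by
      rw [lineStabilizer_comp_subtype]
      exact ⟨(Subgroup.relIndex_subgroupOf hle).trans_ne hH⟩
    obtain ⟨w, hw, h_index⟩ := exists_finiteIndex_lineStabilizer_of_isCyclic_quotient hv hH'
    rw [lineStabilizer_comp_subtype] at h_index
    exact ⟨w, hw, h_index.index_ne_zero⟩

-- The entries of `v` span a free abelian group, so some integral functional does not kill them all.
open scoped Matrix in
lemma exists_int_mulVec_eq_zero [CharZero k] {ι : Type*} [Fintype ι]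
    {S : Set (Matrix ι ι ℤ)} {v : ι → k} (hv : v ≠ 0)
    (hS : ∀ F ∈ S, F.map (Int.cast : ℤ → k) *ᵥ v = 0) :
    ∃ a : ι → ℤ, a ≠ 0 ∧ ∀ F ∈ S, F *ᵥ a = 0 := by
  let M : Submodule ℤ k := Submodule.span ℤ (Set.range v)
  have : Module.Finite ℤ M := Module.Finite.span_of_finite ℤ (Set.finite_range v)
  let w (i : ι) : M := ⟨v i, Submodule.subset_span (Set.mem_range_self i)⟩
  obtain ⟨i, hi⟩ := Function.ne_iff.1 hv
  obtain ⟨l, hl⟩ : ∃ l : Module.Dual ℤ M, l (w i) ≠ 0 := by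
    have h_sep := mt (Module.forall_dual_apply_eq_zero_iff ℤ (w i)).1
      (by simpa [w, ← Subtype.val_inj] using hi)
    simpa only [ne_eq, not_forall] using h_sep
  refine ⟨fun i ↦ l (w i), Function.ne_iff.2 ⟨i, hl⟩, fun F hF ↦ funext fun j ↦ ?_⟩
  have h_row : ∑ i, F j i • w i = 0 := by
    have h := congrFun (hS F hF) j
    ext
    simpa [Matrix.mulVec, dotProduct, w] using h
  calc (F *ᵥ fun i ↦ l (w i)) j = l (∑ i, F j i • w i) := by
        simp only [Matrix.mulVec, dotProduct, map_sum, map_zsmul, smul_eq_mul]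
    _ = 0 := by rw [h_row, map_zero]

theorem IsPolycyclic.exists_apply_mul_comm (hG : IsPolycyclic G) {B : Type*} [AddCommGroup B]
    [Module.Free ℤ B] [Module.Finite ℤ B] [Nontrivial B] (ρ : Representation ℤ G B) :
    ∃ G₁ : Subgroup G, G₁.Normal ∧ G₁.FiniteIndex ∧
      ∃ b : B, b ≠ 0 ∧ ∀ g ∈ G₁, ∀ h ∈ G₁, ρ (g * h) b = ρ (h * g) b := by
  let basis := Module.Free.chooseBasis ℤ B
  have := basis.index_nonempty
  let matrixRep : G →* Matrix _ _ ℤ := (LinearMap.toMatrixAlgEquiv basis).toMonoidHom.comp ρ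
  let complexRep : Representation ℂ G (_ → ℂ) :=
    Matrix.toLinAlgEquiv'.toMonoidHom.comp
      ((Int.castRingHom ℂ).mapMatrix.toMonoidHom.comp matrixRep)
  obtain ⟨v, hv, h_index⟩ := hG.exists_finiteIndex_lineStabilizer complexRep
  let G₁ := (lineStabilizer complexRep v).normalCore
  obtain ⟨a, ha, h_mulVec⟩ := exists_int_mulVec_eq_zero hv
    (S := {F | ∃ g ∈ G₁, ∃ h ∈ G₁, F = matrixRep (g * h) - matrixRep (h * g)}) (by
      rintro _ ⟨g, hg, h, hh, rfl⟩
      rw [Matrix.map_sub _ Int.cast_sub, Matrix.sub_mulVec, sub_eq_zero]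
      exact apply_mul_comm_of_mem_lineStabilizer (Subgroup.normalCore_le _ hg)
        (Subgroup.normalCore_le _ hh))
  refine ⟨G₁, inferInstance, inferInstance, basis.equivFun.symm a,
    (LinearEquiv.map_ne_zero_iff _).2 ha, fun g hg h hh ↦ basis.equivFun.injective ?_⟩
  have h_repr (g : G) :
      basis.equivFun (ρ g (basis.equivFun.symm a)) = (matrixRep g).mulVec a := by
    have := LinearMap.toMatrix_mulVec_repr basis basis (ρ g) (basis.equivFun.symm a)
    rwa [← basis.equivFun_apply, ← basis.equivFun_apply, basis.equivFun.apply_symm_apply,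
      eq_comm] at this
  rw [h_repr, h_repr, ← sub_eq_zero, ← Matrix.sub_mulVec]
  exact h_mulVec _ ⟨g, hg, h, hh, rfl⟩

end LieKolchin

/-! ### Rationally irreducible representations -/

section IrreducibleRepresentations

open scoped IsMulCommutative

variable {G B : Type*} [Group G] [AddCommGroup B] {ρ : Representation ℤ G B}

/-- An integral representation is rationally irreducible if `B` is torsion modulo each of its
nonzero subrepresentations. For torsion-free `B`, this says that `ℚ ⊗ B` has no proper nonzero
subrepresentation. -/
def IsRationallyIrreducible (ρ : Representation ℤ G B) : Prop :=
  ∀ D : Subrepresentation ρ, D.toSubmodule ≠ ⊥ → ∀ b, ∃ n : ℤ, n ≠ 0 ∧ n • b ∈ D.toSubmodule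

lemma IsRationallyIrreducible.eq_zero_of_forall_mem [IsAddTorsionFree B]
    (hρ : IsRationallyIrreducible ρ) (D : Subrepresentation ρ) (hD : D.toSubmodule ≠ ⊥)
    {T : Module.End ℤ B} (hT : ∀ b ∈ D.toSubmodule, T b = 0) : T = 0 := by
  ext b
  obtain ⟨n, hn, hnb⟩ := hρ D hD b
  have h_smul := hT _ hnb
  rw [map_zsmul] at h_smul
  exact (smul_eq_zero.1 h_smul).resolve_left hn

lemma IsRationallyIrreducible.map_mul_comm [IsAddTorsionFree B] (hρ : IsRationallyIrreducible ρ)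
    {N : Subgroup G} [N.Normal] {b : B} (hb : b ≠ 0)
    (h_comm : ∀ g ∈ N, ∀ h ∈ N, ρ (g * h) b = ρ (h * g) b) :
    ∀ g ∈ N, ∀ h ∈ N, ρ (g * h) = ρ (h * g) := by
  let D : Subrepresentation ρ :=
    { toSubmodule := ⨅ g : N, ⨅ h : N, LinearMap.ker (ρ (g * h) - ρ (h * g))
      apply_mem_toSubmodule := fun k v hv ↦ by
        simp only [Submodule.mem_iInf, LinearMap.mem_ker, LinearMap.sub_apply, sub_eq_zero,
          Subtype.forall] at hv ⊢
        intro g hg h hh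
        have h_conj := congrArg (ρ k) (hv _ (Subgroup.Normal.conj_mem' ‹_› g hg k)
          _ (Subgroup.Normal.conj_mem' ‹_› h hh k))
        simp only [← Module.End.mul_apply, ← map_mul] at h_conj ⊢
        convert h_conj using 3 <;> group }
  have hD {v : B} : v ∈ D.toSubmodule ↔ ∀ g ∈ N, ∀ h ∈ N, ρ (g * h) v = ρ (h * g) v := by
    simp only [D, Submodule.mem_iInf, LinearMap.mem_ker, LinearMap.sub_apply, sub_eq_zero,
      Subtype.forall]
  intro g hg h hh
  refine sub_eq_zero.1 (hρ.eq_zero_of_forall_mem D ?_ fun v hv ↦ ?_)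
  · exact (Submodule.ne_bot_iff _).2 ⟨b, hD.2 h_comm, hb⟩
  · rw [LinearMap.sub_apply, sub_eq_zero]
    exact hD.1 hv g hg h hh

/-- Conjugation by `ρ g`, as a ring endomorphism. -/
def conjEnd (ρ : Representation ℤ G B) (g : G) : Module.End ℤ B →+* Module.End ℤ B :=
  MulSemiringAction.toRingHom (ConjAct (Module.End ℤ B)ˣ) _
    (ConjAct.toConjAct (MonoidHom.toHomUnits ρ g))

lemma conjEnd_apply (g : G) (T : Module.End ℤ B) : conjEnd ρ g T = ρ g * T * ρ g⁻¹ := rfl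

-- A vector whose annihilator is an associated prime will do.
lemma exists_ne_zero_forall_isNilpotent_smul_eq_zero (R M : Type*) [CommRing R]
    [IsNoetherianRing R] [AddCommGroup M] [Module R M] [Nontrivial M] :
    ∃ m : M, m ≠ 0 ∧ ∀ r : R, IsNilpotent r → r • m = 0 := by
  obtain ⟨P, hP⟩ := associatedPrimes.nonempty R M
  obtain ⟨hP_prime, m, rfl⟩ := isAssociatedPrime_iff.1 hP
  have h_ann {r : R} : r ∈ (⊥ : Submodule R M).colon {m} ↔ r • m = 0 := by
    rw [Submodule.mem_colon_singleton, Submodule.mem_bot]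
  refine ⟨m, ?_, fun r hr ↦ h_ann.1 (nilradical_le_prime _ (mem_nilradical.2 hr))⟩
  rintro rfl
  exact hP_prime.ne_top ((Ideal.eq_top_iff_one _).2 (h_ann.2 (smul_zero 1)))

lemma finite_int_subring {R : Type*} [Ring R] [Module.Finite ℤ R] (S : Subring R) :
    Module.Finite ℤ S :=
  Module.Finite.of_injective S.subtype.toAddMonoidHom.toIntLinearMap S.subtype_injective

theorem IsRationallyIrreducible.isReduced_closure [Module.Finite ℤ B] [IsAddTorsionFree B]
    [Nontrivial B] (hρ : IsRationallyIrreducible ρ) {N : Subgroup G} [N.Normal]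
    (h_comm : ∀ g ∈ N, ∀ h ∈ N, ρ (g * h) = ρ (h * g)) :
    IsReduced (Subring.closure (ρ '' N)) := by
  have h_conj (k : G) : Subring.closure (ρ '' N) ≤ (Subring.closure (ρ '' N)).comap
      (conjEnd ρ k) := by
    rw [Subring.closure_le]
    rintro _ ⟨g, hg, rfl⟩
    exact Subring.subset_closure
      ⟨k * g * k⁻¹, Subgroup.Normal.conj_mem ‹_› g hg k, by simp only [map_mul, conjEnd_apply]⟩
  let D : Subrepresentation ρ :=
    { toSubmodule :=
        { carrier := {b | ∀ T ∈ Subring.closure (ρ '' N), IsNilpotent T → T b = 0}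
          zero_mem' := fun T _ _ ↦ map_zero T
          add_mem' := fun {a b} ha hb T hT hT_nil ↦ by
            rw [map_add, ha T hT hT_nil, hb T hT hT_nil, add_zero]
          smul_mem' := fun c b hb T hT hT_nil ↦ by rw [map_smul, hb T hT hT_nil, smul_zero] }
      apply_mem_toSubmodule := fun k b hb T hT hT_nil ↦ by
        have h_apply := hb _ (h_conj k⁻¹ hT) (hT_nil.map (conjEnd ρ k⁻¹))
        rw [conjEnd_apply, inv_inv] at h_apply
        simpa only [Module.End.mul_apply, Representation.self_inv_apply, map_zero] using
          congrArg (ρ k) h_apply }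
  have hD : D.toSubmodule ≠ ⊥ := by
    have : IsMulCommutative (Subring.closure (ρ '' N)) := Subring.isMulCommutative_closure <| by
      rintro _ ⟨g, hg, rfl⟩ _ ⟨h, hh, rfl⟩
      rw [← map_mul, h_comm g hg h hh, map_mul]
    have := finite_int_subring (Subring.closure (ρ '' N))
    have : IsNoetherianRing (Subring.closure (ρ '' N)) := isNoetherian_of_tower ℤ inferInstance
    obtain ⟨b, hb, hb_nil⟩ :=
      exists_ne_zero_forall_isNilpotent_smul_eq_zero (Subring.closure (ρ '' N)) B
    refine (Submodule.ne_bot_iff _).2 ⟨b, fun T hT hT_nil ↦ hb_nil ⟨T, hT⟩ ?_, hb⟩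
    exact (IsNilpotent.map_iff (Subring.closure (ρ '' N)).subtype_injective).1 hT_nil
  exact ⟨fun T hT ↦ Subtype.ext <| hρ.eq_zero_of_forall_mem D hD fun b hb ↦
    hb T T.2 (hT.map (Subring.closure (ρ '' N)).subtype)⟩

theorem IsPolycyclic.exists_isReduced_closure [Module.Finite ℤ B] [IsAddTorsionFree B]
    [Nontrivial B] (hG : IsPolycyclic G) (hρ : IsRationallyIrreducible ρ) :
    ∃ N : Subgroup G, N.FiniteIndex ∧ (∀ g ∈ N, ∀ h ∈ N, ρ (g * h) = ρ (h * g)) ∧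
      IsReduced (Subring.closure (ρ '' N)) := by
  obtain ⟨N, _, h_index, b, hb, h_comm⟩ := hG.exists_apply_mul_comm ρ
  have h_comm' := hρ.map_mul_comm hb h_comm
  exact ⟨N, h_index, h_comm', hρ.isReduced_closure h_comm'⟩

end IrreducibleRepresentations

namespace IsCrossedHom

open scoped IsMulCommutative

variable {R B C : Type*} [Ring R] [Group C]

lemma addSubgroup_closure_range_eq_top {f : C →* R} (hf : Subring.closure (Set.range f) = ⊤) :
    AddSubgroup.closure (Set.range f) = ⊤ := by
  refine (AddSubgroup.eq_top_iff' _).2 fun r ↦ ?_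
  have hr : r ∈ Subring.closure (Set.range f) := hf ▸ Subring.mem_top r
  rwa [Subring.mem_closure_iff, ← MonoidHom.coe_mrange, Submonoid.closure_eq] at hr

theorem isProfinitelyClosed_range_of_isReduced [Module.Finite ℤ R] [AddCommGroup B]
    [AddGroup.FG B] [Module R B] {ρ : C →* Rˣ} {δ : C → B} (hδ : IsCrossedHom ρ δ)
    (C' : Subgroup C) [C'.FiniteIndex] (h_comm : ∀ g ∈ C', ∀ h ∈ C', ρ (g * h) = ρ (h * g))
    (h_red : IsReduced (Subring.closure ((fun c ↦ (ρ c : R)) '' C'))) :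
    IsProfinitelyClosed (Set.range δ) := by
  let S : Subring R := Subring.closure ((fun c ↦ (ρ c : R)) '' C')
  have : Module.Finite ℤ S := finite_int_subring S
  have : IsMulCommutative S := Subring.isMulCommutative_closure <| by
    rintro _ ⟨g, hg, rfl⟩ _ ⟨h, hh, rfl⟩
    simp only [← Units.val_mul, ← map_mul, h_comm g hg h hh]
  let f : C' →* S := ((Units.coeHom R).comp (ρ.comp C'.subtype)).codRestrict S
    fun c ↦ Subring.subset_closure ⟨c, c.2, rfl⟩
  have h_map : (Subring.closure (Set.range f)).map S.subtype = S := by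
    rw [RingHom.map_closure, ← Set.range_comp]
    exact congrArg Subring.closure (Set.image_eq_range (fun c ↦ (ρ c : R)) C').symm
  have h_top : Subring.closure (Set.range f) = ⊤ := by
    refine eq_top_iff.2 fun r _ ↦ ?_
    obtain ⟨r', hr', h⟩ := h_map.ge r.2
    rwa [← Subtype.ext h]
  have hδ' : IsCrossedHom f.toHomUnits (δ ∘ C'.subtype) := fun g h ↦ hδ g h
  have := hδ'.isProfinitelyClosed_range (addSubgroup_closure_range_eq_top h_top)
  refine hδ.isProfinitelyClosed_range_of_finiteIndex C' ?_
  rwa [Set.range_comp, Subgroup.coe_subtype, Subtype.range_coe] at this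

end IsCrossedHom

/-! ### Conjugacy classes in polycyclic groups -/

section ConjugationRepresentation

open scoped IsMulCommutative commutatorElement

variable {G : Type*} [Group G]

/-- The action of a group by conjugation on a normal abelian subgroup, written additively. -/
def conjRepresentation (A : Subgroup G) [A.Normal] [IsMulCommutative A] :
    Representation ℤ G (Additive A) :=
  (Representation.ofMulDistribMulAction (ConjAct G) A).comp ConjAct.toConjAct.toMonoidHom

/-- The subgroup of elements whose image in `G ⧸ A` commutes with that of `x`. -/
def centralizerMod (A : Subgroup G) [A.Normal] (x : G) : Subgroup G :=
  (Subgroup.centralizer {(x : G ⧸ A)}).comap (QuotientGroup.mk' A)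

lemma mem_centralizerMod_iff {A : Subgroup G} [A.Normal] {x g : G} :
    g ∈ centralizerMod A x ↔ ⁅g, x⁆ ∈ A := by
  rw [centralizerMod, Subgroup.mem_comap, Subgroup.mem_centralizer_singleton_iff, eq_comm,
    ← QuotientGroup.mk'_apply, eq_comm, ← commutatorElement_eq_one_iff_mul_comm,
    ← map_commutatorElement, QuotientGroup.mk'_apply, QuotientGroup.eq_one_iff]

section CommutatorMap

variable (A : Subgroup G) [A.Normal] (x : G)

/-- The map `g ↦ ⁅g, x⁆` into `A`, whose values are the `a` for which `a * x` is a conjugate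
of `x`. -/
def commutatorMap (g : centralizerMod A x) : Additive A :=
  .ofMul ⟨⁅(g : G), x⁆, mem_centralizerMod_iff.1 g.2⟩

variable [IsMulCommutative A]

lemma isCrossedHom_commutatorMap :
    IsCrossedHom ((conjRepresentation A).toHomUnits.comp (centralizerMod A x).subtype)
      (commutatorMap A x) := fun g h ↦ by
  rw [add_comm]
  exact congrArg Additive.ofMul (Subtype.ext (commutatorElement_mul_left_eq_conj_mul (g : G) h x))

variable {A x}

lemma isConj_mul_of_forall_isConj_pow_mul
    (h_closed : IsProfinitelyClosed (Set.range (commutatorMap A x))) {a : A}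
    (h_conj : ∀ m : ℕ, 0 < m → ∃ b : A, IsConj x (b ^ m * (a * x))) : IsConj x (a * x) := by
  have h_mem : Additive.ofMul a ∈ Set.range (commutatorMap A x) := h_closed _ fun m hm ↦ by
    obtain ⟨b, hb⟩ := h_conj m hm
    obtain ⟨g, hg⟩ := isConj_iff.1 hb
    have h_comm : ⁅g, x⁆ = (b ^ m * a : A) := by
      rw [commutatorElement_def, hg, ← mul_assoc, mul_inv_cancel_right]
      rfl
    refine ⟨_, ⟨⟨g, mem_centralizerMod_iff.2 (h_comm ▸ SetLike.coe_mem _)⟩, rfl⟩,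
      -Additive.ofMul b, ?_⟩
    rw [smul_neg, eq_add_neg_iff_add_eq, add_comm]
    exact congrArg Additive.ofMul (Subtype.ext h_comm.symm)
  obtain ⟨g, hg⟩ := h_mem
  have h_comm : ⁅(g : G), x⁆ = a := congrArg (fun b : Additive A ↦ (b.toMul : G)) hg
  exact isConj_iff.2 ⟨g, mul_inv_eq_iff_eq_mul.1 h_comm⟩

end CommutatorMap

theorem IsPolycyclic.isProfinitelyClosed_range_commutatorMap (hG : IsPolycyclic G)
    {A : Subgroup G} [A.Normal] [IsMulCommutative A] [IsMulTorsionFree A] [Nontrivial A]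
    (hA : IsRationallyIrreducible (conjRepresentation A)) (x : G) :
    IsProfinitelyClosed (Set.range (commutatorMap A x)) := by
  have : Group.FG A := (Group.fg_iff_subgroup_fg A).2 (hG.fg_subgroup A)
  have : Module.Finite ℤ (Additive A) := Module.Finite.iff_addGroup_fg.2 inferInstance
  obtain ⟨N, _, h_comm, h_red⟩ := hG.exists_isReduced_closure hA
  refine (isCrossedHom_commutatorMap A x).isProfinitelyClosed_range_of_isReduced
    (N.subgroupOf (centralizerMod A x))
    (fun g hg h hh ↦ Units.ext (h_comm g hg h hh)) ?_
  have h_le : Subring.closure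
      ((fun c ↦ (((conjRepresentation A).toHomUnits.comp (centralizerMod A x).subtype c : _ˣ) :
        Module.End ℤ (Additive A))) '' (N.subgroupOf (centralizerMod A x))) ≤
      Subring.closure (conjRepresentation A '' N) := Subring.closure_mono <| by
    rintro _ ⟨c, hc, rfl⟩
    exact ⟨c, hc, rfl⟩
  exact isReduced_of_injective (Subring.inclusion h_le) (Subring.inclusion_injective h_le)

end ConjugationRepresentation

section NormalSubgroups

open scoped IsMulCommutative

variable {G : Type*} [Group G]

lemma exists_infinite_normal_finite_commutator [Group.IsSolvable G] [Infinite G] :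
    ∃ K : Subgroup G, K.Normal ∧ Infinite K ∧ Finite (⁅K, K⁆ : Subgroup G) := by
  classical
  obtain ⟨n, hn⟩ := (Group.isSolvable_def G).1 ‹_›
  have h_fin : ∃ n, Finite (derivedSeries G n) := ⟨n, by rw [hn]; infer_instance⟩
  obtain ⟨k, hk⟩ : ∃ k, Nat.find h_fin = k + 1 := by
    refine Nat.exists_eq_succ_of_ne_zero fun h_zero ↦ ?_
    have h_top := Nat.find_spec h_fin
    rw [h_zero, derivedSeries_zero] at h_top
    exact Infinite.not_finite (α := G) (Finite.of_equiv _ Subgroup.topEquiv.toEquiv)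
  refine ⟨derivedSeries G k, inferInstance,
    not_finite_iff_infinite.1 (Nat.find_min h_fin (hk ▸ k.lt_succ_self)), ?_⟩
  rw [← derivedSeries_succ, ← hk]
  exact Nat.find_spec h_fin

lemma finite_commutatorSet_coe (K : Subgroup G) [Finite (⁅K, K⁆ : Subgroup G)] :
    Finite (commutatorSet K) := by
  refine Finite.of_injective (β := (⁅K, K⁆ : Subgroup G)) (fun c ↦ ⟨(c : K), ?_⟩)
    fun a b h ↦ Subtype.ext (Subtype.ext (Subtype.mk.inj h))
  obtain ⟨_, a, b, rfl⟩ := c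
  exact Subgroup.commutator_mem_commutator a.2 b.2

lemma IsPolycyclic.exists_infinite_normal_isMulCommutative (hG : IsPolycyclic G) [Infinite G] :
    ∃ A : Subgroup G, A.Normal ∧ IsMulCommutative A ∧ Infinite A := by
  have := hG.isSolvable
  obtain ⟨K, _, _, _⟩ := exists_infinite_normal_finite_commutator (G := G)
  have : Group.FG K := (Group.fg_iff_subgroup_fg K).2 (hG.fg_subgroup K)
  have := finite_commutatorSet_coe K
  have : Infinite (Subgroup.center K) := by
    refine not_finite_iff_infinite.1 fun _ ↦ Infinite.not_finite (α := K) ?_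
    exact Finite.of_equiv _ (Subgroup.groupEquivQuotientProdSubgroup (s := .center K)).symm
  exact ⟨(Subgroup.center K).map K.subtype, inferInstance, inferInstance,
    .of_injective _ (Subgroup.equivMapOfInjective _ _ K.subtype_injective).injective⟩

section PowSubgroup

variable (A : Subgroup G) [IsMulCommutative A]

/-- The subgroup of `n`-th powers of an abelian subgroup. -/
def powSubgroup (n : ℕ) : Subgroup G :=
  (powMonoidHom n : A →* A).range.map A.subtype

variable {A} in
lemma mem_powSubgroup_iff {n : ℕ} {g : G} : g ∈ powSubgroup A n ↔ ∃ a : A, (a : G) ^ n = g := by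
  simp only [powSubgroup, Subgroup.mem_map, MonoidHom.mem_range, powMonoidHom_apply,
    exists_exists_eq_and, Subgroup.subtype_apply, SubmonoidClass.coe_pow]

instance (n : ℕ) : IsMulCommutative (powSubgroup A n) :=
  Subgroup.map_isMulCommutative _ _

instance [A.Normal] (n : ℕ) : (powSubgroup A n).Normal where
  conj_mem g hg h := by
    obtain ⟨a, rfl⟩ := mem_powSubgroup_iff.1 hg
    exact mem_powSubgroup_iff.2 ⟨⟨h * a * h⁻¹, ‹A.Normal›.conj_mem a a.2 h⟩, conj_pow⟩

lemma powSubgroup_ne_bot [IsMulTorsionFree A] [Nontrivial A] {n : ℕ} (hn : n ≠ 0) :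
    powSubgroup A n ≠ ⊥ := fun h ↦ by
  obtain ⟨a, ha⟩ := exists_ne (1 : A)
  have h_pow : (a : G) ^ n = 1 :=
    Subgroup.mem_bot.1 (h ▸ mem_powSubgroup_iff.2 ⟨a, rfl⟩)
  exact ha ((pow_eq_one_iff_left hn).1 (Subtype.ext h_pow))

lemma exists_isMulTorsionFree_powSubgroup [Group.FG A] [Infinite A] :
    ∃ n, IsMulTorsionFree (powSubgroup A n) ∧ Nontrivial (powSubgroup A n) := by
  obtain ⟨n, hn, hn_tors⟩ := exists_pos_nsmul_eq_zero_of_isOfFinAddOrder (Additive A)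
  have h_pow (a : A) (ha : IsOfFinOrder a) : a ^ n = 1 :=
    hn_tors (Additive.ofMul a) (isOfFinAddOrder_ofMul_iff.2 ha)
  refine ⟨n, ?_, ?_⟩
  · refine IsMulTorsionFree.of_not_isOfFinOrder fun ⟨g, hg⟩ hg_one hg_fin ↦ hg_one ?_
    obtain ⟨a, rfl⟩ := mem_powSubgroup_iff.1 hg
    obtain ⟨k, hk, hak⟩ := isOfFinOrder_iff_pow_eq_one.1 hg_fin
    have h_pow_pow : (a ^ n) ^ k = 1 := Subtype.ext (Subtype.mk.inj hak)
    have h_fin : IsOfFinOrder a :=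
      isOfFinOrder_iff_pow_eq_one.2 ⟨n * k, Nat.mul_pos hn hk, pow_mul a n k ▸ h_pow_pow⟩
    exact Subtype.ext (congrArg (Subtype.val : A → G) (h_pow a h_fin))
  · rw [Subgroup.nontrivial_iff_ne_bot]
    intro h_bot
    refine Infinite.not_finite (α := A) (CommGroup.finite_of_fg_isMulTorsion A fun a ↦ ?_)
    refine isOfFinOrder_iff_pow_eq_one.2 ⟨n, hn, Subtype.ext (Subgroup.mem_bot.1 ?_)⟩
    exact h_bot ▸ mem_powSubgroup_iff.2 ⟨a, rfl⟩

end PowSubgroup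

lemma exists_normal_of_subrepresentation {A : Subgroup G} [A.Normal] [IsMulCommutative A]
    (D : Subrepresentation (conjRepresentation A)) :
    ∃ B ≤ A, B.Normal ∧ ∀ a : A, (a : G) ∈ B ↔ Additive.ofMul a ∈ D.toSubmodule := by
  refine ⟨(D.toSubmodule.toAddSubgroup.toSubgroup').map A.subtype, Subgroup.map_subtype_le _,
    ⟨?_⟩, ?_⟩
  · rintro _ ⟨a, ha, rfl⟩ g
    exact ⟨_, D.apply_mem_toSubmodule g ha, rfl⟩
  · intro a
    exact Subgroup.mem_map_iff_mem A.subtype_injective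

lemma finrank_lt_of_forall_smul_notMem {M : Type*} [AddCommGroup M] [Module.Finite ℤ M]
    {D : Submodule ℤ M} {b : M} (hb : ∀ n : ℤ, n ≠ 0 → n • b ∉ D) :
    Module.finrank ℤ D < Module.finrank ℤ M := by
  have h_quot : Module.finrank ℤ (M ⧸ D) ≠ 0 := by
    rw [Ne, Module.finrank_eq_zero_iff]
    intro h
    obtain ⟨n, hn, hnb⟩ := h (D.mkQ b)
    exact hb n hn ((Submodule.Quotient.mk_eq_zero D).1 hnb)
  have := Submodule.finrank_quotient_add_finrank D
  lia

lemma IsPolycyclic.exists_isRationallyIrreducible (hG : IsPolycyclic G) (A : Subgroup G) [A.Normal]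
    [IsMulCommutative A] [IsMulTorsionFree A] [Nontrivial A] :
    ∃ (B : Subgroup G) (_ : B.Normal) (_ : IsMulCommutative B),
      IsMulTorsionFree B ∧ Nontrivial B ∧ IsRationallyIrreducible (conjRepresentation B) := by
  induction h_rank : Module.finrank ℤ (Additive A) using Nat.strong_induction_on generalizing A with
  | h r ih =>
    subst h_rank
    by_cases hA : IsRationallyIrreducible (conjRepresentation A)
    · exact ⟨A, inferInstance, inferInstance, inferInstance, inferInstance, hA⟩
    simp only [IsRationallyIrreducible, not_forall, not_exists, not_and] at hA
    obtain ⟨D, hD, b, hb⟩ := hA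
    have : Group.FG A := (Group.fg_iff_subgroup_fg A).2 (hG.fg_subgroup A)
    have : Module.Finite ℤ (Additive A) := Module.Finite.iff_addGroup_fg.2 inferInstance
    obtain ⟨B, hBA, _, h_mem⟩ := exists_normal_of_subrepresentation D
    have h_inj : Function.Injective (Subgroup.inclusion hBA) := Subgroup.inclusion_injective hBA
    have : IsMulCommutative B := ⟨⟨fun a b ↦ h_inj (by simp only [map_mul, mul_comm])⟩⟩
    have : IsMulTorsionFree B := h_inj.isMulTorsionFree _
    let ι : Additive B →ₗ[ℤ] Additive A := (Subgroup.inclusion hBA).toAdditive.toIntLinearMap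
    have h_range : LinearMap.range ι = D.toSubmodule := Submodule.ext fun a ↦
      ⟨by rintro ⟨b, rfl⟩; exact (h_mem _).1 b.toMul.2,
        fun ha ↦ ⟨.ofMul ⟨a.toMul, (h_mem _).2 ha⟩, rfl⟩⟩
    have : Nontrivial B := by
      obtain ⟨a, ha, ha_zero⟩ := Submodule.exists_mem_ne_zero_of_ne_bot hD
      refine ⟨⟨a.toMul, (h_mem _).2 ha⟩, 1, fun h ↦ ha_zero ?_⟩
      exact Additive.toMul.injective (Subtype.ext (Subtype.mk.inj h))
    have h_lt : Module.finrank ℤ (Additive B) < Module.finrank ℤ (Additive A) := by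
      rw [← LinearMap.finrank_range_of_inj (f := ι) h_inj, h_range]
      exact finrank_lt_of_forall_smul_notMem hb
    exact ih _ h_lt B rfl

lemma IsPolycyclic.exists_isRationallyIrreducible_of_infinite (hG : IsPolycyclic G) [Infinite G] :
    ∃ (A : Subgroup G) (_ : A.Normal) (_ : IsMulCommutative A),
      IsMulTorsionFree A ∧ Nontrivial A ∧ IsRationallyIrreducible (conjRepresentation A) := by
  obtain ⟨A, _, _, _⟩ := hG.exists_infinite_normal_isMulCommutative
  have : Group.FG A := (Group.fg_iff_subgroup_fg A).2 (hG.fg_subgroup A)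
  obtain ⟨n, _, _⟩ := exists_isMulTorsionFree_powSubgroup A
  exact hG.exists_isRationallyIrreducible (powSubgroup A n)

end NormalSubgroups

section ConjugacySeparability

open scoped IsMulCommutative

variable {G : Type u} [Group G]

lemma exists_isConj_pow_mul {A : Subgroup G} [A.Normal] [IsMulCommutative A] {x y : G} {m : ℕ}
    (h : IsConj (x : G ⧸ powSubgroup A m) y) : ∃ b : A, IsConj x (b ^ m * y) := by
  obtain ⟨q, hq⟩ := isConj_iff.1 h
  obtain ⟨g, rfl⟩ := QuotientGroup.mk_surjective q
  have h_mem : g * x * g⁻¹ * y⁻¹ ∈ powSubgroup A m := by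
    rw [← QuotientGroup.eq_one_iff]
    exact mul_inv_eq_one.2 hq
  obtain ⟨b, hb⟩ := mem_powSubgroup_iff.1 h_mem
  exact ⟨b, isConj_iff.2 ⟨g, by rw [hb, inv_mul_cancel_right]⟩⟩

theorem IsPolycyclic.isConj_of_forall_powSubgroup (hG : IsPolycyclic G) {A : Subgroup G}
    [A.Normal] [IsMulCommutative A] [IsMulTorsionFree A] [Nontrivial A]
    (hA : IsRationallyIrreducible (conjRepresentation A)) {x y : G}
    (h : ∀ m : ℕ, 0 < m → IsConj (x : G ⧸ powSubgroup A m) y) : IsConj x y := by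
  obtain ⟨b, hb⟩ := exists_isConj_pow_mul (h 1 one_pos)
  rw [pow_one] at hb
  have h_conj (m : ℕ) (hm : 0 < m) :
      ∃ c : A, IsConj ((b : G) * y) (c ^ m * ((b⁻¹ : A) * (b * y))) := by
    obtain ⟨c, hc⟩ := exists_isConj_pow_mul (h m hm)
    exact ⟨c, by rw [InvMemClass.coe_inv, inv_mul_cancel_left]; exact hb.symm.trans hc⟩
  have h_closed := hG.isProfinitelyClosed_range_commutatorMap hA (b * y)
  have := isConj_mul_of_forall_isConj_pow_mul h_closed h_conj
  rw [InvMemClass.coe_inv, inv_mul_cancel_left] at this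
  exact hb.trans this

lemma ConjugacySeparable.of_finite [Finite G] : ConjugacySeparable G :=
  fun _ _ h ↦ ⟨G, inferInstance, inferInstance, .id G, Function.surjective_id, h⟩

theorem IsPolycyclic.conjugacySeparable_of_quotients (hG : IsPolycyclic G)
    (h_quot : ∀ (M : Subgroup G) [M.Normal], M ≠ ⊥ → ConjugacySeparable (G ⧸ M)) :
    ConjugacySeparable G := by
  rcases finite_or_infinite G with _ | _
  · exact .of_finite
  obtain ⟨A, _, _, _, _, hA⟩ := hG.exists_isRationallyIrreducible_of_infinite
  intro x y hxy
  obtain ⟨m, hm, h_not_conj⟩ : ∃ m : ℕ, 0 < m ∧ ¬ IsConj (x : G ⧸ powSubgroup A m) y := by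
    by_contra! h
    exact hxy (hG.isConj_of_forall_powSubgroup hA h)
  obtain ⟨Q, _, _, f, hf, h_not_conj⟩ :=
    h_quot _ (powSubgroup_ne_bot A hm.ne') _ _ h_not_conj
  exact ⟨Q, inferInstance, inferInstance, f.comp (QuotientGroup.mk' _),
    hf.comp (QuotientGroup.mk'_surjective _), h_not_conj⟩

theorem IsPolycyclic.conjugacySeparable_of_surjective (hG : IsPolycyclic G) {H : Type u} [Group H]
    {f : G →* H} (hf : Function.Surjective f) : ConjugacySeparable H := by
  have := hG.wellFoundedGT_subgroup
  obtain ⟨N, hN⟩ : ∃ N, f.ker = N := ⟨_, rfl⟩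
  induction N using WellFoundedGT.induction generalizing H with
  | ind N ih =>
    subst hN
    refine (hG.of_surjective hf).conjugacySeparable_of_quotients fun M _ hM ↦ ?_
    have h_lt : f.ker < ((QuotientGroup.mk' M).comp f).ker := by
      rw [← MonoidHom.comap_ker, QuotientGroup.ker_mk', ← MonoidHom.comap_bot]
      exact (Subgroup.comap_lt_comap_of_surjective hf).2 (bot_lt_iff_ne_bot.2 hM)
    exact ih _ h_lt ((QuotientGroup.mk'_surjective M).comp hf) rfl

end ConjugacySeparability

/-- Remeslennikov: polycyclic groups are conjugacy separable. -/
theorem conjugacySeparable_of_isPolycyclic (G : Type u) [Group G]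
    (h : IsPolycyclic G) : ConjugacySeparable G :=
  h.conjugacySeparable_of_surjective (f := .id G) Function.surjective_id
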